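/- For every k ∈ ℕ, every p < 1/2 and every ε > 0, there exist an integer m > k and δ > 0 such that for all q ∈ [0, δ), P_{p,q}(C_m(S_m)) < ε, where S_m = [0, m−1]²×{0,1,…,k} and C_m(S_m) is the event that some vertex of S_m is connected by a path of open edges to a vertex at distance m from S_m (distance measured in the maximum norm). -/

import Mathlib

open MeasureTheory Set
open scoped ENNReal

namespace AnisoSlab

/-! ### A concrete construction of countable products of Bernoulli measures

The product Bernoulli measure on `ι → Bool` (each coordinate `i` open with
probability `P i`, independently) is realized as the pushforward of Lebesgue
measure on `[0,1)`: the binary digits of a uniform sample are i.i.d. fair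
coins; regrouping them along a pairing function yields countably many
independent uniform samples, and comparing the `i`-th sample with `P i`
yields the desired independent Bernoulli coordinates. -/

/-- The `n`-th binary digit of `x` (digits after the binary point). -/
noncomputable def binDigit (n : ℕ) (x : ℝ) : Bool :=
  decide (⌊x * 2 ^ (n + 1)⌋ % 2 = 1)

/-- Countably many independent uniform-`[0,1]` samples extracted from a single
uniform sample `x` on `[0,1)`, by regrouping its binary digits. -/
noncomputable def unifSample (i : ℕ) (x : ℝ) : ℝ :=
  ∑' n : ℕ, if binDigit (Nat.pair i n) x then ((2 : ℝ) ^ (n + 1))⁻¹ else 0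

/-- The product Bernoulli measure on `ι → Bool`, coordinate `i` being `true`
with probability `P i`, independently over `i`. -/
noncomputable def bernoulliProduct {ι : Type*} [Encodable ι] (P : ι → ℝ) :
    Measure (ι → Bool) :=
  Measure.map (fun x i => decide (unifSample (Encodable.encode i) x < P i))
    (volume.restrict (Set.Ico (0 : ℝ) 1))

/-! ### The slab `S^k` and anisotropic bond percolation on it -/

/-- Ambient vertices: `ℤ³`; the slab `S^k` uses those with third coordinate in `{0, …, k}`. -/
abbrev Vtx : Type := ℤ × ℤ × ℤ

/-- The three unit coordinate vectors. -/
def dvec : Fin 3 → Vtx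
  | 0 => (1, 0, 0)
  | 1 => (0, 1, 0)
  | 2 => (0, 0, 1)

/-- A bond is indexed by its lower endpoint `v` and a direction `i`; it joins
`v` to `v + dvec i`. Directions `0, 1` give radial (horizontal) bonds, and
direction `2` gives axial (vertical) bonds. -/
abbrev EdgeIdx : Type := Vtx × Fin 3

/-- A percolation configuration: each bond is open (`true`) or closed (`false`). -/
abbrev Config : Type := EdgeIdx → Bool

/-- `v` is a vertex of the slab `S^k`. -/
def InSlab (k : ℕ) (v : Vtx) : Prop := 0 ≤ v.2.2 ∧ v.2.2 ≤ k

/-- `(v, i)` is a bond of the slab `S^k` (both endpoints lie in the slab). -/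
def IsEdge (k : ℕ) (e : EdgeIdx) : Prop := InSlab k e.1 ∧ InSlab k (e.1 + dvec e.2)

/-- The measure `P_{p,q}` on configurations of `S^k`: each radial (horizontal)
bond is open with probability `p` and each axial (vertical) bond is open with
probability `q`, independently. -/
noncomputable def slabMeasure (k : ℕ) (p q : ℝ) : Measure Config :=
  bernoulliProduct (fun e => if e.2 = 2 then q else p)

/-- `x` and `y` are joined by an open bond of `S^k` in the configuration `ω`. -/
def OpenAdj (k : ℕ) (ω : Config) (x y : Vtx) : Prop :=
  ∃ i : Fin 3,
    (y = x + dvec i ∧ IsEdge k (x, i) ∧ ω (x, i) = true) ∨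
    (x = y + dvec i ∧ IsEdge k (y, i) ∧ ω (y, i) = true)

/-- The open cluster of the vertex `x` in the configuration `ω`. -/
def cluster (k : ℕ) (ω : Config) (x : Vtx) : Set Vtx :=
  {y | Relation.ReflTransGen (OpenAdj k ω) x y}

/-- The percolation function `θ(p,q) = P_{p,q}(0 ↔ ∞)`. -/
noncomputable def theta (k : ℕ) (p q : ℝ) : ℝ≥0∞ :=
  slabMeasure k p q {ω | (cluster k ω 0).Infinite}

/-- `p_k = 1 - (1/2)^{1/(k+1)}`, the horizontal critical value at `q = 1`. -/
noncomputable def pCrit (k : ℕ) : ℝ := 1 - (1 / 2 : ℝ) ^ ((1 : ℝ) / (k + 1))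

/-- The critical curve `q_c(p) = sup {q ∈ [0,1] : θ(p,q) = 0}`. -/
noncomputable def qc (k : ℕ) (p : ℝ) : ℝ :=
  sSup {q : ℝ | q ∈ Set.Icc (0 : ℝ) 1 ∧ theta k p q = 0}

/-- The critical curve `p_c(q) = sup {p ∈ [0,1] : θ(p,q) = 0}`. -/
noncomputable def pc (k : ℕ) (q : ℝ) : ℝ :=
  sSup {p : ℝ | p ∈ Set.Icc (0 : ℝ) 1 ∧ theta k p q = 0}


/-- The sup-norm (maximum-norm) distance on `ℤ³`. -/
def supDist (x y : Vtx) : ℤ := max |x.1 - y.1| (max |x.2.1 - y.2.1| |x.2.2 - y.2.2|)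

/-- The event `C_m(A)`: some vertex of `A` is connected by an open path to a
vertex at maximum-norm distance `m` from `A`. -/
def CmEvent (k m : ℕ) (A : Set Vtx) : Set Config :=
  {ω | ∃ x ∈ A, ∃ y ∈ cluster k ω x,
        (∀ a ∈ A, (m : ℤ) ≤ supDist y a) ∧ ∃ a ∈ A, supDist y a = (m : ℤ)}

/-- The box `S_m = [0, m-1]² × {0,…,k}`. -/
def Sm (k m : ℕ) : Set Vtx :=
  {v | 0 ≤ v.1 ∧ v.1 ≤ (m : ℤ) - 1 ∧ 0 ≤ v.2.1 ∧ v.2.1 ≤ (m : ℤ) - 1 ∧ InSlab k v}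

/-! If `q` is small, then with high probability all vertical edges near `S_m` are closed, and a
connection from `S_m` to distance `m` stays in one of the `k + 1` layers, which are copies of the
square lattice. It therefore suffices that in `ℤ²` at the parameter `p < 1/2` the probability of a
connection from the origin to distance `m` is `o(m⁻²)`.

Duminil-Copin and Tassion: if `φ_p(S) < 1` for a finite set `S` containing the origin, then this
probability decays exponentially in `m`. If `φ_p(S) ≥ 1` for all such `S`, then by Russo's formula
the origin percolates at every parameter in `(p, 1/2)`, and this has to be excluded.

If it percolates at `p < 1/2`, then a large box has, by Harris' inequality, an open arm to each side
of any larger box with probability close to one, and since `p ≤ 1 - p`, the same holds for dual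
arms. So with a probability bounded below, a block of edges has open arms to the left and to the
right and dual arms to the top and to the bottom, and then opening the block merges two clusters.
Raise the parameter from `p` to `1/2` in `T²` disjoint blocks, one after the other: each step
reduces the expected number of clusters that reach the boundary of the surrounding box by a
constant. But there are at most `O(T)` of these clusters. -/

section LocalEvents

variable {ι κ α : Type*}

/-- A local (cylinder) event: whether it occurs is decided by finitely many coordinates. -/
def IsLocal (A : Set (ι → α)) : Prop :=
  ∃ F : Finset ι, DependsOn (· ∈ A) (F : Set ι)

lemma dependsOn_mem_of_imp {A : Set (ι → α)} {F : Set ι}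
    (h : ∀ ω ω', (∀ i ∈ F, ω i = ω' i) → ω ∈ A → ω' ∈ A) : DependsOn (· ∈ A) F :=
  fun ω ω' hω => propext ⟨h ω ω' hω, h ω' ω fun i hi => (hω i hi).symm⟩

lemma dependsOn_mem_inter {A B : Set (ι → α)} {F : Set ι}
    (hA : DependsOn (· ∈ A) F) (hB : DependsOn (· ∈ B) F) : DependsOn (· ∈ A ∩ B) F :=
  fun _ _ h => congrArg₂ And (hA h) (hB h)

lemma dependsOn_mem_coord (a : α) (i : ι) : DependsOn (· ∈ {ω : ι → α | ω i = a}) {i} :=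
  fun _ _ h => congrArg (· = a) (h i rfl)

lemma IsLocal.of_dependsOn {A : Set (ι → α)} {F : Set ι} (hA : DependsOn (· ∈ A) F)
    (hF : F.Finite) : IsLocal A :=
  ⟨hF.toFinset, by rwa [hF.coe_toFinset]⟩

lemma IsLocal.inter {A B : Set (ι → α)} : IsLocal A → IsLocal B → IsLocal (A ∩ B)
  | ⟨F, hF⟩, ⟨G, hG⟩ => .of_dependsOn
      (dependsOn_mem_inter (hF.mono subset_union_left) (hG.mono subset_union_right))
      (F.finite_toSet.union G.finite_toSet)

lemma IsLocal.biUnion {s : Finset κ} {A : κ → Set (ι → α)} (hA : ∀ k ∈ s, IsLocal (A k)) :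
    IsLocal (⋃ k ∈ s, A k) := by
  choose! F hF using hA
  refine .of_dependsOn (F := ⋃ k ∈ s, (F k : Set ι)) (dependsOn_mem_of_imp fun ω ω' h hω => ?_)
    (s.finite_toSet.biUnion fun k _ => (F k).finite_toSet)
  obtain ⟨k, hk, hω⟩ := mem_iUnion₂.1 hω
  exact mem_biUnion hk ((hF k hk fun i hi => h i (mem_biUnion hk hi)).mp hω)

lemma IsLocal.measurableSet [MeasurableSpace α] [Finite α] [MeasurableSingletonClass α]
    {A : Set (ι → α)} (hA : IsLocal A) : MeasurableSet A := by
  obtain ⟨F, hF⟩ := hA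
  have : A = F.restrict ⁻¹' (F.restrict '' A) := by
    refine (subset_preimage_image _ A).antisymm ?_
    rintro ω ⟨ω', hω', h⟩
    exact (hF fun i hi => congrFun h ⟨i, hi⟩).mp hω'
  rw [this]
  exact F.measurable_restrict (toFinite _).measurableSet

end LocalEvents

section ProductMeasure

variable {ι : Type*} {X : ι → Type*} [∀ i, MeasurableSpace (X i)]

lemma measurableSet_iSup_comap_eval {A : Set (∀ i, X i)} (hA : MeasurableSet A)
    {F : Set ι} (hF : DependsOn (· ∈ A) F) :
    MeasurableSet[⨆ i ∈ F, MeasurableSpace.comap (Function.eval i) inferInstance] A := by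
  classical
  rcases A.eq_empty_or_nonempty with rfl | ⟨ω₀, -⟩
  · exact @MeasurableSet.empty _ (_)
  let freeze : (∀ i, X i) → ∀ i, X i := fun ω i => if i ∈ F then ω i else ω₀ i
  have hA' : A = freeze ⁻¹' A := by
    ext ω
    exact iff_of_eq (hF fun i hi => by simp [freeze, hi])
  rw [hA']
  have measurable_freeze :
      Measurable[⨆ i ∈ F, MeasurableSpace.comap (Function.eval i) inferInstance] freeze := by
    refine @measurable_pi_lambda _ _ _ (⨆ i ∈ F, _) _ freeze fun i => ?_
    by_cases hi : i ∈ F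
    · simp only [freeze, if_pos hi]
      exact (comap_measurable (Function.eval i)).mono (le_iSup₂_of_le i hi le_rfl) le_rfl
    · simp only [freeze, if_neg hi]
      exact measurable_const
  exact measurable_freeze hA

lemma infinitePi_real_inter_of_dependsOn (μ : ∀ i, Measure (X i)) [∀ i, IsProbabilityMeasure (μ i)]
    {A B : Set (∀ i, X i)} (hA : MeasurableSet A) (hB : MeasurableSet B) {F G : Set ι}
    (hF : DependsOn (· ∈ A) F) (hG : DependsOn (· ∈ B) G) (hFG : Disjoint F G) :
    (Measure.infinitePi μ).real (A ∩ B) =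
      (Measure.infinitePi μ).real A * (Measure.infinitePi μ).real B := by
  have hind := ProbabilityTheory.iIndepFun_infinitePi (P := μ) (X := fun _ x => x)
    fun _ => measurable_id
  have := ProbabilityTheory.indep_iSup_of_disjoint (fun i => (measurable_pi_apply i).comap_le)
    hind hFG
  simp only [measureReal_def, ← ENNReal.toReal_mul]
  congr 1
  exact (ProbabilityTheory.Indep_iff _ _ _).1 this A B
    (measurableSet_iSup_comap_eval hA hF) (measurableSet_iSup_comap_eval hB hG)

end ProductMeasure

section BooleanProduct

variable {ι : Type*}

/-- Completes a configuration on finitely many coordinates by the value `false`. -/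
noncomputable def extendFalse (F : Finset ι) (η : F → Bool) : ι → Bool :=
  Function.extend Subtype.val η fun _ => false

lemma extendFalse_apply (F : Finset ι) (η : F → Bool) (i : F) : extendFalse F η i = η i :=
  Subtype.val_injective.extend_apply η _ i

lemma extendFalse_mono (F : Finset ι) : Monotone (extendFalse F) := by
  intro η η' h i
  by_cases hi : i ∈ F
  · simpa only [extendFalse_apply F _ ⟨i, hi⟩] using h ⟨i, hi⟩
  · have : ¬ ∃ j : F, j.1 = i := fun ⟨j, hj⟩ => hi (hj ▸ j.2)
    simp [extendFalse, Function.extend_apply' _ _ _ this]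

lemma dependsOn_mem_extendFalse {A : Set (ι → Bool)} {F : Finset ι}
    (hA : DependsOn (· ∈ A) (F : Set ι)) (ω : ι → Bool) :
    extendFalse F (F.restrict ω) ∈ A ↔ ω ∈ A :=
  iff_of_eq (hA fun i hi => extendFalse_apply F _ ⟨i, hi⟩)

variable (μ : ι → Measure Bool) [∀ i, IsProbabilityMeasure (μ i)]

open Classical in
lemma infinitePi_real_eq_sum {A : Set (ι → Bool)} {F : Finset ι}
    (hA : DependsOn (· ∈ A) (F : Set ι)) :
    (Measure.infinitePi μ).real A =
      ∑ η : F → Bool, if extendFalse F η ∈ A then ∏ i : F, (μ i).real {η i} else 0 := by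
  let A' : Finset (F → Bool) := Finset.univ.filter (extendFalse F · ∈ A)
  have hA' : A = F.restrict ⁻¹' A' := by
    ext ω
    simp [A', dependsOn_mem_extendFalse hA]
  rw [hA', measureReal_def, ← Measure.map_apply (by fun_prop) (toFinite _).measurableSet,
    Measure.infinitePi_map_restrict, ← measureReal_def, ← sum_measureReal_singleton,
    Finset.sum_filter]
  simp only [← hA', measureReal_def, Measure.pi_singleton, ENNReal.toReal_prod]

lemma harris_inequality {A B : Set (ι → Bool)} (hA : IsUpperSet A) (hB : IsUpperSet B)
    (hA' : IsLocal A) (hB' : IsLocal B) :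
    (Measure.infinitePi μ).real A * (Measure.infinitePi μ).real B ≤
      (Measure.infinitePi μ).real (A ∩ B) := by
  classical
  obtain ⟨F₁, hF₁⟩ := hA'
  obtain ⟨F₂, hF₂⟩ := hB'
  let F := F₁ ∪ F₂
  have hFA : DependsOn (· ∈ A) (F : Set ι) := hF₁.mono (by simp [F])
  have hFB : DependsOn (· ∈ B) (F : Set ι) := hF₂.mono (by simp [F])
  let weight : (F → Bool) → ℝ := fun η => ∏ i : F, (μ i).real {η i}
  have weight_lattice : ∀ η η', weight η * weight η' ≤ weight (η ⊓ η') * weight (η ⊔ η') := by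
    intro η η'
    simp only [weight, ← Finset.prod_mul_distrib]
    refine (Finset.prod_congr rfl fun i _ => ?_).le
    cases h : η i <;> cases h' : η' i <;> simp [h, h', mul_comm]
  have indicator_nonneg : ∀ {P : Prop} [Decidable P], (0 : ℝ) ≤ if P then 1 else 0 := by
    intros; positivity
  have indicator_mono : ∀ {C : Set (ι → Bool)}, IsUpperSet C →
      Monotone fun η : F → Bool => if extendFalse F η ∈ C then (1 : ℝ) else 0 := by
    intro C hC η η' h
    have := fun hη => hC (extendFalse_mono F h) hη
    dsimp only
    split_ifs <;> simp_all
  have sum_weight : ∑ η, weight η = 1 := by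
    have := infinitePi_real_eq_sum μ (A := univ) (F := F) fun _ _ _ => rfl
    simpa [weight] using this.symm
  have := fkg _ _ weight (fun η => Finset.prod_nonneg fun i _ => measureReal_nonneg)
    (fun _ => indicator_nonneg)
    (fun _ => indicator_nonneg) (indicator_mono hA) (indicator_mono hB) weight_lattice
  rw [infinitePi_real_eq_sum μ hFA, infinitePi_real_eq_sum μ hFB,
    infinitePi_real_eq_sum μ (dependsOn_mem_inter hFA hFB)]
  simpa only [sum_weight, one_mul, mul_ite, mul_one, mul_zero, ← ite_and, mem_inter_iff,
    and_comm] using this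

lemma one_sub_mul_one_sub_le_one_sub_union {A B : Set (ι → Bool)} (hA : IsUpperSet A)
    (hB : IsUpperSet B) (hA' : IsLocal A) (hB' : IsLocal B) :
    (1 - (Measure.infinitePi μ).real A) * (1 - (Measure.infinitePi μ).real B) ≤
      1 - (Measure.infinitePi μ).real (A ∪ B) := by
  have harris := harris_inequality μ hA hB hA' hB'
  have := measureReal_union_add_inter (μ := Measure.infinitePi μ) (s := A) hB'.measurableSet
  linarith

end BooleanProduct

section Percolation

variable {ι κ : Type*}

/-- The uniform distribution on `[0, 1)`. -/
noncomputable def unitUniform : Measure ℝ := volume.restrict (Ico 0 1)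

instance : IsProbabilityMeasure unitUniform := ⟨by simp [unitUniform]⟩

lemma unitUniform_real_Ico {a b : ℝ} (ha : 0 ≤ a) (hab : a ≤ b) (hb : b ≤ 1) :
    unitUniform.real (Ico a b) = b - a := by
  have : Ico a b ∩ Ico 0 1 = Ico a b := inter_eq_left.2 (Ico_subset_Ico ha hb)
  rw [unitUniform, measureReal_restrict_apply measurableSet_Ico, this,
    Real.volume_real_Ico_of_le hab]

/-- The law of a biased coin, which is `true` with probability `p` if `p ∈ [0, 1]`. -/
noncomputable def coin (p : ℝ) : Measure Bool := unitUniform.map fun u => decide (u < p)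

lemma measurable_decide_lt (p : ℝ) : Measurable fun u : ℝ => decide (u < p) :=
  measurable_to_bool (by simpa [preimage] using (measurableSet_Iio (a := p)).mem)

instance (p : ℝ) : IsProbabilityMeasure (coin p) :=
  Measure.isProbabilityMeasure_map (measurable_decide_lt p).aemeasurable

lemma coin_real_true {p : ℝ} (hp : p ∈ Icc (0 : ℝ) 1) : (coin p).real {true} = p := by
  rw [coin, map_measureReal_apply (measurable_decide_lt p) (measurableSet_singleton _)]
  have : (fun u => decide (u < p)) ⁻¹' {true} = Iio p := by ext; simp
  have hIio : Iio p ∩ Ico 0 1 = Ico 0 p := by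
    ext u
    simp only [mem_inter_iff, mem_Iio, mem_Ico]
    exact ⟨fun h => ⟨h.2.1, h.1⟩, fun h => ⟨h.2, h.1, h.2.trans_le hp.2⟩⟩
  rw [this, unitUniform, measureReal_restrict_apply measurableSet_Iio, hIio,
    Real.volume_real_Ico_of_le hp.1, sub_zero]

lemma coin_real_false {p : ℝ} (hp : p ∈ Icc (0 : ℝ) 1) : (coin p).real {false} = 1 - p := by
  have := probReal_compl_eq_one_sub (μ := coin p) (measurableSet_singleton true)
  rwa [coin_real_true hp, show ({true}ᶜ : Set Bool) = {false} by ext b; simp] at this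

/-- Independent uniform labels attached to the elements of `ι`. They couple the measures
`percMeasure P` for all `P`. -/
noncomputable def uniformField (ι : Type*) : Measure (ι → ℝ) :=
  Measure.infinitePi fun _ => unitUniform

instance : IsProbabilityMeasure (uniformField ι) := by
  unfold uniformField; infer_instance

/-- The configuration in which `i` is open exactly when its label is less than `P i`. -/
noncomputable def threshold (P u : ι → ℝ) : ι → Bool := fun i => decide (u i < P i)

lemma threshold_mono (u : ι → ℝ) : Monotone fun P : ι → ℝ => threshold P u := by
  intro P Q h i
  simpa [threshold, Bool.le_iff_imp] using fun hi => lt_of_lt_of_le hi (h i)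

@[fun_prop]
lemma measurable_threshold (P : ι → ℝ) : Measurable (threshold P) :=
  measurable_pi_lambda _ fun i => (measurable_decide_lt (P i)).comp (measurable_pi_apply i)

/-- Inhomogeneous Bernoulli percolation: the elements of `ι` are open independently, `i` with
probability `P i` (if `P i ∈ [0, 1]`). -/
noncomputable def percMeasure (P : ι → ℝ) : Measure (ι → Bool) :=
  (uniformField ι).map (threshold P)

instance (P : ι → ℝ) : IsProbabilityMeasure (percMeasure P) :=
  Measure.isProbabilityMeasure_map (measurable_threshold P).aemeasurable

/-- The probability of an event under inhomogeneous Bernoulli percolation. -/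
notation "ℙ[" P "]" => Measure.real (percMeasure P)

/-- The probability of an event under Bernoulli percolation with constant parameter. -/
notation "ℙ⟦" p "⟧" => Measure.real (percMeasure fun _ => p)

lemma percMeasure_eq_infinitePi (P : ι → ℝ) :
    percMeasure P = Measure.infinitePi fun i => coin (P i) :=
  Measure.infinitePi_map_pi _ fun i => measurable_decide_lt (P i)

lemma prob_eq_uniformField {P : ι → ℝ} {A : Set (ι → Bool)} (hA : MeasurableSet A) :
    ℙ[P] A = (uniformField ι).real {u | threshold P u ∈ A} :=
  map_measureReal_apply (measurable_threshold P) hA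

lemma prob_mono_param {P Q : ι → ℝ} (hPQ : P ≤ Q) {A : Set (ι → Bool)} (hA : IsUpperSet A)
    (hA' : MeasurableSet A) : ℙ[P] A ≤ ℙ[Q] A := by
  rw [prob_eq_uniformField hA', prob_eq_uniformField hA']
  exact measureReal_mono fun u hu => hA (threshold_mono u hPQ) hu

lemma prob_open {P : ι → ℝ} {i : ι} (hP : P i ∈ Icc (0 : ℝ) 1) :
    ℙ[P] {ω | ω i = true} = P i := by
  rw [percMeasure_eq_infinitePi, ← coin_real_true hP, measureReal_def, measureReal_def,
    ← Measure.infinitePi_map_eval (fun i => coin (P i)) i,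
    Measure.map_apply (measurable_pi_apply i) (measurableSet_singleton _)]
  rfl

lemma prob_inter_of_dependsOn (P : ι → ℝ) {A B : Set (ι → Bool)} (hA : MeasurableSet A)
    (hB : MeasurableSet B) {F G : Set ι} (hF : DependsOn (· ∈ A) F) (hG : DependsOn (· ∈ B) G)
    (hFG : Disjoint F G) : ℙ[P] (A ∩ B) = ℙ[P] A * ℙ[P] B := by
  rw [percMeasure_eq_infinitePi]
  exact infinitePi_real_inter_of_dependsOn _ hA hB hF hG hFG

lemma one_sub_prob_mul_le (P : ι → ℝ) {A B : Set (ι → Bool)} (hA : IsUpperSet A)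
    (hB : IsUpperSet B) (hA' : IsLocal A) (hB' : IsLocal B) :
    (1 - ℙ[P] A) * (1 - ℙ[P] B) ≤ 1 - ℙ[P] (A ∪ B) := by
  rw [percMeasure_eq_infinitePi]
  exact one_sub_mul_one_sub_le_one_sub_union _ hA hB hA' hB'

lemma prod_one_sub_prob_le (P : ι → ℝ) (s : Finset κ) {A : κ → Set (ι → Bool)}
    (hA : ∀ k ∈ s, IsUpperSet (A k)) (hA' : ∀ k ∈ s, IsLocal (A k)) :
    ∏ k ∈ s, (1 - ℙ[P] (A k)) ≤ 1 - ℙ[P] (⋃ k ∈ s, A k) := by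
  classical
  induction s using Finset.induction_on with
  | empty => simp
  | insert k s hk ih =>
    simp only [Finset.forall_mem_insert] at hA hA'
    rw [Finset.prod_insert hk, Finset.set_biUnion_insert]
    calc (1 - ℙ[P] (A k)) * ∏ k ∈ s, (1 - ℙ[P] (A k))
        ≤ (1 - ℙ[P] (A k)) * (1 - ℙ[P] (⋃ k ∈ s, A k)) :=
          mul_le_mul_of_nonneg_left (ih hA.2 hA'.2) (sub_nonneg.2 measureReal_le_one)
      _ ≤ 1 - ℙ[P] (A k ∪ ⋃ k ∈ s, A k) := one_sub_prob_mul_le P hA.1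
          (isUpperSet_iUnion₂ hA.2) hA'.1 (.biUnion hA'.2)

lemma prob_preimage_comp {f : κ → ι} (hf : f.Injective) (P : ι → ℝ) {A : Set (κ → Bool)}
    (hA : MeasurableSet A) : ℙ[P] {ω | ω ∘ f ∈ A} = ℙ[P ∘ f] A := by
  rw [percMeasure_eq_infinitePi, percMeasure_eq_infinitePi, Function.comp_def,
    ← Measure.map_infinitePi_infinitePi_of_inj (P := fun i => coin (P i)) hf,
    map_measureReal_apply (by fun_prop) hA]
  rfl

lemma coin_map_not {p : ℝ} (hp : p ∈ Icc (0 : ℝ) 1) : (coin p).map not = coin (1 - p) := by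
  have hp' : 1 - p ∈ Icc (0 : ℝ) 1 := ⟨by linarith [hp.2], by linarith [hp.1]⟩
  refine Measure.ext_of_singleton fun b => (measureReal_eq_measureReal_iff).1 ?_
  rw [map_measureReal_apply (measurable_of_finite not) (measurableSet_singleton b)]
  have : not ⁻¹' {b} = {!b} := by ext c; cases b <;> cases c <;> simp
  cases b <;> simp [this, coin_real_true, coin_real_false, hp, hp']

lemma prob_preimage_not {P : ι → ℝ} (hP : ∀ i, P i ∈ Icc (0 : ℝ) 1) {A : Set (ι → Bool)}
    (hA : MeasurableSet A) : ℙ[P] {ω | (fun i => !ω i) ∈ A} = ℙ[fun i => 1 - P i] A := by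
  simp only [percMeasure_eq_infinitePi, ← coin_map_not (hP _)]
  rw [← Measure.infinitePi_map_pi _ fun _ => measurable_of_finite not,
    map_measureReal_apply (by fun_prop) hA]
  rfl

open Classical in
/-- The event that `i` is closed and pivotal for `A`: the event `A` fails, but occurs once `i` is
opened. -/
def ClosedPivotal (A : Set (ι → Bool)) (i : ι) : Set (ι → Bool) :=
  {ω | ω ∉ A ∧ Function.update ω i true ∈ A}

lemma prob_inter_open_sub {P : ι → ℝ} {i : ι} (hP : P i ∈ Icc (0 : ℝ) 1) {A : Set (ι → Bool)}
    (hA : IsUpperSet A) (hA' : IsLocal A) :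
    ℙ[P] (A ∩ {ω | ω i = true}) - P i * ℙ[P] A = P i * ℙ[P] (ClosedPivotal A i) := by
  classical
  let A₁ : Set (ι → Bool) := {ω | Function.update ω i true ∈ A}
  have A_subset : A ⊆ A₁ := fun ω hω =>
    hA (le_update_iff.2 ⟨le_top, fun _ _ => le_rfl⟩) hω
  obtain ⟨F, hF⟩ := hA'
  have hA₁ : DependsOn (· ∈ A₁) ((F : Set ι) ∩ {i}ᶜ) := fun ω ω' h => hF fun j hj => by
    by_cases hji : j = i
    · simp [hji]
    · simp [hji, h j ⟨hj, hji⟩]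
  have A₁_measurable := (IsLocal.of_dependsOn hA₁ (F.finite_toSet.inter_of_left _)).measurableSet
  have inter_open : A ∩ {ω | ω i = true} = A₁ ∩ {ω | ω i = true} := by
    ext ω
    refine and_congr_left fun hi => ?_
    simp only [A₁, mem_ofPred_eq, ← show ω i = true from hi, Function.update_eq_self]
  have hopen := dependsOn_mem_coord true i
  rw [inter_open, prob_inter_of_dependsOn P A₁_measurable
    (IsLocal.of_dependsOn hopen (finite_singleton i)).measurableSet hA₁ hopen
    (disjoint_compl_left.mono_left inter_subset_right), prob_open hP, mul_comm, ← mul_sub,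
    ← measureReal_sdiff A_subset (IsLocal.measurableSet ⟨F, hF⟩)]
  congr 2
  ext ω
  exact and_comm

open Classical in
lemma prob_eq_sum {p : ℝ} (hp : p ∈ Icc (0 : ℝ) 1) {A : Set (ι → Bool)} {F : Finset ι}
    (hA : DependsOn (· ∈ A) (F : Set ι)) :
    ℙ⟦p⟧ A = ∑ η : F → Bool,
      if extendFalse F η ∈ A then ∏ i, if η i then p else 1 - p else 0 := by
  rw [percMeasure_eq_infinitePi, infinitePi_real_eq_sum _ hA]
  have : ∀ b, (coin p).real {b} = if b then p else 1 - p := by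
    rintro (_ | _) <;> simp [coin_real_true, coin_real_false, hp]
  simp only [this]

lemma hasDerivAt_prod_bernoulli {α : Type*} [Fintype α] (η : α → Bool) {p : ℝ} (hp : p ≠ 0)
    (hp' : 1 - p ≠ 0) :
    HasDerivAt (fun p => ∏ i, if η i then p else 1 - p)
      (∑ i, ((if η i then 1 else 0) - p) / (p * (1 - p)) *
        ∏ i, if η i then p else 1 - p) p := by
  classical
  have factor : ∀ b : Bool, HasDerivAt (fun p : ℝ => if b then p else 1 - p)
      (if b then 1 else -1) p := by
    rintro (_ | _)
    · simpa using (hasDerivAt_id p).const_sub 1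
    · simpa using hasDerivAt_id' p
  refine (HasDerivAt.fun_finsetProd fun i _ => factor (η i)).congr_deriv
    (Finset.sum_congr rfl fun i _ => ?_)
  rw [← Finset.mul_prod_erase _ (fun i => if η i then p else 1 - p) (Finset.mem_univ i)]
  cases η i <;> simp <;> field_simp

lemma hasDerivAt_prob {p : ℝ} (hp : p ∈ Ioo (0 : ℝ) 1) {A : Set (ι → Bool)} {F : Finset ι}
    (hA : DependsOn (· ∈ A) (F : Set ι)) :
    HasDerivAt (fun p => ℙ⟦p⟧ A)
      (∑ i ∈ F, (ℙ⟦p⟧ (A ∩ {ω | ω i = true}) - p * ℙ⟦p⟧ A) / (p * (1 - p))) p := by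
  classical
  have sum_formula : (fun p => ℙ⟦p⟧ A) =ᶠ[nhds p] fun p => ∑ η : F → Bool,
      if extendFalse F η ∈ A then ∏ i, if η i then p else 1 - p else 0 := by
    filter_upwards [Ioo_mem_nhds hp.1 hp.2] with r hr
    exact prob_eq_sum (Ioo_subset_Icc_self hr) hA
  have term_deriv : ∀ η : F → Bool, HasDerivAt
      (fun p => if extendFalse F η ∈ A then ∏ i, if η i then p else 1 - p else 0)
      (if extendFalse F η ∈ A then _ else 0) p := fun η => by
    split_ifs
    · exact hasDerivAt_prod_bernoulli η hp.1.ne' (sub_pos.2 hp.2).ne'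
    · exact hasDerivAt_const p 0
  refine ((HasDerivAt.fun_sum fun η _ => term_deriv η).congr_of_eventuallyEq
    sum_formula).congr_deriv ?_
  have inter_open : ∀ i : F, DependsOn (· ∈ A ∩ {ω | ω i = true}) (F : Set ι) := fun i =>
    dependsOn_mem_inter hA ((dependsOn_mem_coord true i.1).mono (by simp))
  rw [← Finset.sum_coe_sort F]
  simp only [prob_eq_sum (Ioo_subset_Icc_self hp) (inter_open _),
    prob_eq_sum (Ioo_subset_Icc_self hp) hA, Finset.mul_sum, ← Finset.sum_sub_distrib,
    Finset.sum_div]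
  rw [Finset.sum_comm]
  refine Finset.sum_congr rfl fun η _ => ?_
  by_cases hη : extendFalse F η ∈ A
  · simp only [mem_inter_iff, hη, true_and, if_true]
    refine Finset.sum_congr rfl fun i _ => ?_
    simp only [mem_ofPred_eq, extendFalse_apply]
    split_ifs <;> ring
  · simp [hη]

lemma russo_formula {p : ℝ} (hp : p ∈ Ioo (0 : ℝ) 1) {A : Set (ι → Bool)}
    (hA : IsUpperSet A) {F : Finset ι} (hF : DependsOn (· ∈ A) (F : Set ι)) :
    HasDerivAt (fun p => ℙ⟦p⟧ A) ((∑ i ∈ F, ℙ⟦p⟧ (ClosedPivotal A i)) / (1 - p)) p := by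
  refine (hasDerivAt_prob hp hF).congr_deriv ?_
  rw [Finset.sum_div]
  refine Finset.sum_congr rfl fun i _ => ?_
  rw [prob_inter_open_sub (P := fun _ => p) (Ioo_subset_Icc_self hp) hA ⟨F, hF⟩,
    mul_div_mul_left _ _ hp.1.ne']

end Percolation

section Paths

open Relation

variable {V : Type*} {r s : V → V → Prop} {R S : Set V} {x y z : V}

/-- The restriction of a relation to a set. Its reflexive transitive closure is connection by a
path inside the set. -/
def within (r : V → V → Prop) (R : Set V) : V → V → Prop :=
  fun x y => r x y ∧ x ∈ R ∧ y ∈ R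

/-- Some `r`-path leads from `x` to a vertex outside `R`. -/
def Exits (r : V → V → Prop) (R : Set V) (x : V) : Prop :=
  ∃ y ∉ R, ReflTransGen r x y

lemma within_mono (hrs : ∀ x ∈ R, ∀ y ∈ R, r x y → s x y) (hRS : R ⊆ S) (h : within r R x y) :
    within s S x y :=
  ⟨hrs x h.2.1 y h.2.2 h.1, hRS h.2.1, hRS h.2.2⟩

lemma reflTransGen_within_mono (hrs : ∀ x ∈ R, ∀ y ∈ R, r x y → s x y) (hRS : R ⊆ S)
    (h : ReflTransGen (within r R) x y) : ReflTransGen (within s S) x y :=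
  ReflTransGen.mono (fun _ _ => within_mono hrs hRS) _ _ h

lemma reflTransGen_of_within (h : ReflTransGen (within r R) x y) : ReflTransGen r x y :=
  ReflTransGen.mono (fun _ _ h => h.1) _ _ h

lemma mem_of_reflTransGen_within (h : ReflTransGen (within r R) x y) (hx : x ∈ R) : y ∈ R := by
  induction h with
  | refl => exact hx
  | tail _ h _ => exact h.2.2

lemma Exits.of_reflTransGen (h : Exits r R y) (hxy : ReflTransGen r x y) : Exits r R x :=
  let ⟨z, hz, hyz⟩ := h
  ⟨z, hz, hxy.trans hyz⟩

lemma Exits.head (h : Exits r R y) (hxy : r x y) : Exits r R x :=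
  h.of_reflTransGen (.single hxy)

lemma Exits.of_notMem (hx : x ∉ R) : Exits r R x := ⟨x, hx, .refl⟩

@[elab_as_elim]
lemma Exits.induction_on {motive : ∀ x, Exits r R x → Prop} (h : Exits r R x)
    (notMem : ∀ y (hy : y ∉ R), motive y (.of_notMem hy))
    (head : ∀ y ∈ R, ∀ z (hyz : r y z) (hz : Exits r R z), motive z hz → motive y (hz.head hyz)) :
    motive x h := by
  obtain ⟨w, hw, hxw⟩ := h
  induction hxw using ReflTransGen.head_induction_on with
  | refl => exact notMem w hw
  | @head y z hyz hzw ih =>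
    by_cases hy : y ∈ R
    · exact head y hy z hyz ⟨w, hw, hzw⟩ ih
    · exact notMem y hy

lemma Exits.mono (hrs : ∀ x ∈ R, ∀ y, r x y → s x y) (h : Exits r R x) : Exits s R x := by
  induction h using Exits.induction_on with
  | notMem y hy => exact .of_notMem hy
  | head y hy z hyz _ ih => exact ih.head (hrs y hy z hyz)

lemma Exits.anti (hRS : R ⊆ S) (h : Exits r S x) : Exits r R x :=
  let ⟨y, hy, hxy⟩ := h
  ⟨y, fun hy' => hy (hRS hy'), hxy⟩

lemma exists_last_exit (h : ReflTransGen r x y) (hx : x ∈ R) (hy : y ∉ R) :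
    ∃ z ∈ R, ∃ w ∉ R, r z w ∧ ReflTransGen (within r Rᶜ) w y := by
  induction h with
  | refl => exact absurd hx hy
  | @tail b c _ hbc ih =>
    by_cases hb : b ∈ R
    · exact ⟨b, hb, c, hy, hbc, .refl⟩
    · obtain ⟨z, hz, w, hw, hzw, hwb⟩ := ih hb
      exact ⟨z, hz, w, hw, hzw, hwb.tail ⟨hbc, hb, hy⟩⟩

end Paths

section GraphPercolation

open Relation

variable {V E : Type*} {G : Graph V E} {ω ω' : E → Bool} {R S B : Set V} {x y : V}

/-- The vertices `x` and `y` are joined by an open edge. -/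
def OpenLink (G : Graph V E) (ω : E → Bool) (x y : V) : Prop :=
  ∃ e, ω e = true ∧ G.IsLink e x y

lemma OpenLink.symm (h : OpenLink G ω x y) : OpenLink G ω y x :=
  let ⟨e, he, hxy⟩ := h
  ⟨e, he, hxy.symm⟩

lemma OpenLink.mono (hω : ω ≤ ω') (h : OpenLink G ω x y) : OpenLink G ω' x y :=
  let ⟨e, he, hxy⟩ := h
  ⟨e, Bool.le_iff_imp.1 (hω e) he, hxy⟩

lemma OpenLink.congr (hω : ∀ e, G.IsLink e x y → ω e = ω' e) (h : OpenLink G ω x y) :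
    OpenLink G ω' x y :=
  let ⟨e, he, hxy⟩ := h
  ⟨e, hω e hxy ▸ he, hxy⟩

/-- The edges with both ends in `R`. -/
def innerEdges (G : Graph V E) (R : Set V) : Set E := {e | ∃ x ∈ R, ∃ y ∈ R, G.IsLink e x y}

/-- The edges with at least one end in `R`. -/
def incidentEdges (G : Graph V E) (R : Set V) : Set E := ⋃ x ∈ R, G.incidenceSet x

lemma mem_incidentEdges {e : E} (h : G.IsLink e x y) (hx : x ∈ R) : e ∈ incidentEdges G R :=
  mem_biUnion hx h.inc_left

lemma incidentEdges_mono (h : R ⊆ S) : incidentEdges G R ⊆ incidentEdges G S :=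
  biUnion_subset_biUnion_left h

lemma innerEdges_subset_incidentEdges : innerEdges G R ⊆ incidentEdges G R :=
  fun _ ⟨_, hx, _, _, h⟩ => mem_incidentEdges h hx

lemma mem_of_mem_innerEdges {e : E} (he : e ∈ innerEdges G R) (h : G.IsLink e x y) : x ∈ R := by
  obtain ⟨x', hx', y', hy', h'⟩ := he
  rcases h.eq_and_eq_or_eq_and_eq h' with ⟨rfl, -⟩ | ⟨rfl, -⟩ <;> assumption

lemma finite_incidentEdges (hG : ∀ x, (G.incidenceSet x).Finite) (hR : R.Finite) :
    (incidentEdges G R).Finite :=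
  hR.biUnion fun x _ => hG x

lemma finite_innerEdges (hG : ∀ x, (G.incidenceSet x).Finite) (hR : R.Finite) :
    (innerEdges G R).Finite :=
  (finite_incidentEdges hG hR).subset innerEdges_subset_incidentEdges

lemma dependsOn_exits (R : Set V) (x : V) :
    DependsOn (· ∈ {ω | Exits (OpenLink G ω) R x}) (incidentEdges G R) :=
  dependsOn_mem_of_imp fun _ _ hω => Exits.mono fun _ hy _ =>
    OpenLink.congr fun e he => hω e (mem_incidentEdges he hy)

lemma isLocal_exits (hG : ∀ x, (G.incidenceSet x).Finite) (hR : R.Finite) (x : V) :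
    IsLocal {ω | Exits (OpenLink G ω) R x} :=
  .of_dependsOn (dependsOn_exits R x) (finite_incidentEdges hG hR)

lemma isUpperSet_exits (R : Set V) (x : V) : IsUpperSet {ω | Exits (OpenLink G ω) R x} :=
  fun _ _ hω => Exits.mono fun _ _ _ => OpenLink.mono hω

lemma dependsOn_exits_within (R S : Set V) (x : V) :
    DependsOn (· ∈ {ω | Exits (within (OpenLink G ω) S) R x})
      (incidentEdges G R ∩ innerEdges G S) :=
  dependsOn_mem_of_imp fun _ _ hω => Exits.mono fun _ hy _ h =>
    ⟨h.1.congr fun e he => hω e ⟨mem_incidentEdges he hy, _, h.2.1, _, h.2.2, he⟩, h.2⟩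

lemma dependsOn_reflTransGen_within (R : Set V) (x y : V) :
    DependsOn (· ∈ {ω | ReflTransGen (within (OpenLink G ω) R) x y}) (innerEdges G R) :=
  dependsOn_mem_of_imp fun _ _ hω => reflTransGen_within_mono
    (fun _ hx _ hy => OpenLink.congr fun e he => hω e ⟨_, hx, _, hy, he⟩) le_rfl

lemma isUpperSet_reflTransGen_within (R : Set V) (x y : V) :
    IsUpperSet {ω | ReflTransGen (within (OpenLink G ω) R) x y} :=
  fun _ _ hω => reflTransGen_within_mono (fun _ _ _ _ => OpenLink.mono hω) le_rfl

/-- The cluster of `o` in the subgraph induced by `S`. -/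
def clusterWithin (G : Graph V E) (S : Set V) (o : V) (ω : E → Bool) : Set V :=
  {x | ReflTransGen (within (OpenLink G ω) S) o x}

lemma clusterWithin_subset {o : V} (ho : o ∈ S) : clusterWithin G S o ω ⊆ S :=
  fun _ hx => mem_of_reflTransGen_within hx ho

lemma dependsOn_clusterWithin_eq (S C : Set V) (o : V) :
    DependsOn (· ∈ {ω | clusterWithin G S o ω = C}) (innerEdges G S ∩ incidentEdges G C) := by
  refine dependsOn_mem_of_imp fun ω ω' hω hC => ?_
  have agree : ∀ x ∈ C, ∀ y, x ∈ S → y ∈ S → ∀ e, G.IsLink e x y → ω e = ω' e :=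
    fun x hx y hxS hyS e he => hω e ⟨⟨x, hxS, y, hyS, he⟩, mem_incidentEdges he hx⟩
  have mem_C : ∀ x, ReflTransGen (within (OpenLink G ω) S) o x ↔ x ∈ C := fun x => by
    rw [← show clusterWithin G S o ω = C from hC]; rfl
  ext x
  refine ⟨fun hx => ?_, fun hx => ?_⟩
  · induction hx with
    | refl => exact (mem_C o).1 .refl
    | @tail y z _ h hy =>
      exact (mem_C z).1 (.tail ((mem_C y).2 hy)
        ⟨h.1.congr fun e he => (agree y hy z h.2.1 h.2.2 e he).symm, h.2⟩)
  · induction (mem_C x).2 hx with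
    | refl => exact .refl
    | @tail y z hy h ih =>
      have hyC := (mem_C y).1 hy
      exact (ih hyC).tail ⟨h.1.congr (agree y hyC z h.2.1 h.2.2), h.2⟩

lemma dependsOn_not_exits_eq (B S : Set V) :
    DependsOn (· ∈ {ω | {x | ¬ Exits (OpenLink G ω) B x} = S})
      (incidentEdges G B \ innerEdges G S) := by
  refine dependsOn_mem_of_imp fun ω ω' hω hS => ?_
  have not_exits : ∀ x ∈ S, ¬ Exits (OpenLink G ω) B x := fun x hx => by
    rwa [← show {x | ¬ Exits (OpenLink G ω) B x} = S from hS] at hx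
  have agree : ∀ x ∈ B, ∀ y, Exits (OpenLink G ω) B x ∨ Exits (OpenLink G ω) B y →
      ∀ e, G.IsLink e x y → ω e = ω' e := fun x hx y hxy e he =>
    hω e ⟨mem_incidentEdges he hx, fun hS => hxy.elim
      (not_exits x (mem_of_mem_innerEdges hS he)) (not_exits y (mem_of_mem_innerEdges hS he.symm))⟩
  have exits_iff : ∀ x, Exits (OpenLink G ω') B x ↔ Exits (OpenLink G ω) B x := by
    refine fun x => ⟨fun h => ?_, fun h => ?_⟩
    · induction h using Exits.induction_on with
      | notMem y hy => exact .of_notMem hy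
      | head y hy z hyz _ ih =>
        exact ih.head (hyz.congr fun e he => (agree y hy z (.inr ih) e he).symm)
    · induction h using Exits.induction_on with
      | notMem y hy => exact .of_notMem hy
      | head y hy z hyz hz ih => exact ih.head (hyz.congr (agree y hy z (.inr hz)))
  simpa only [mem_ofPred_eq, exits_iff] using hS

end GraphPercolation

section DuminilCopinTassion

open Relation

variable {V E : Type*} {G : Graph V E} {ω : E → Bool} {S B : Set V} {o : V} {p q θ : ℝ}

lemma sum_measureReal_le_of_subset {Ω ι : Type*} [MeasurableSpace Ω] {μ : Measure Ω}
    [IsFiniteMeasure μ] {Q : Finset ι} {A : ι → Set Ω} {R : Set Ω}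
    (hA : ∀ i ∈ Q, MeasurableSet (A i)) (hdisj : (Q : Set ι).PairwiseDisjoint A)
    (hR : ∀ i ∈ Q, A i ⊆ R) : ∑ i ∈ Q, μ.real (A i) ≤ μ.real R := by
  rw [← measureReal_biUnion_finset hdisj hA]
  exact measureReal_mono (iUnion₂_subset hR)

lemma pairwiseDisjoint_fiber {Ω α : Type*} (X : Ω → Set α) (Q : Finset (Finset α)) :
    (Q : Set (Finset α)).PairwiseDisjoint fun S => {ω | X ω = S} :=
  fun _ _ _ _ hne => disjoint_left.2 fun _ h h' => hne (Finset.coe_injective (h.symm.trans h'))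

/-- The event that `e` joins the cluster of `o` in `S` to a vertex outside `S`. -/
def ReachesEdge (G : Graph V E) (S : Set V) (o : V) (e : E) : Set (E → Bool) :=
  {ω | ∃ x ∈ clusterWithin G S o ω, ∃ y ∉ S, x ∈ S ∧ G.IsLink e x y}

lemma dependsOn_reachesEdge (S : Set V) (o : V) (e : E) :
    DependsOn (· ∈ ReachesEdge G S o e) (innerEdges G S) :=
  dependsOn_mem_of_imp fun _ _ hω ⟨x, hx, h⟩ =>
    ⟨x, ((dependsOn_reflTransGen_within S o x) hω).mp hx, h⟩

lemma isLocal_reachesEdge (hG : ∀ x, (G.incidenceSet x).Finite) (hS : S.Finite) (e : E) :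
    IsLocal (ReachesEdge G S o e) :=
  .of_dependsOn (dependsOn_reachesEdge S o e) (finite_innerEdges hG hS)

lemma isUpperSet_reachesEdge (S : Set V) (o : V) (e : E) : IsUpperSet (ReachesEdge G S o e) :=
  fun _ _ hω ⟨x, hx, h⟩ => ⟨x, isUpperSet_reflTransGen_within S o x hω hx, h⟩

/-- The quantity `φ_p(S)` of Duminil-Copin and Tassion: the expected number of open edges from the
cluster of `o` in `S` to the complement of `S`. -/
noncomputable def phi (G : Graph V E) (o : V) (p : ℝ) (S : Set V) : ℝ :=
  ∑' e, p * ℙ⟦p⟧ (ReachesEdge G S o e)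

lemma reachesEdge_eq_empty {e : E} (he : e ∉ incidentEdges G S) : ReachesEdge G S o e = ∅ :=
  eq_empty_of_forall_notMem fun _ ⟨_, _, _, _, hx, h⟩ => he (mem_incidentEdges h hx)

lemma phi_eq_sum {F : Finset E} (hF : incidentEdges G S ⊆ F) (o : V) (p : ℝ) :
    phi G o p S = ∑ e ∈ F, p * ℙ⟦p⟧ (ReachesEdge G S o e) :=
  tsum_eq_sum fun e he => by
    rw [reachesEdge_eq_empty fun h => he (hF h), measureReal_empty, mul_zero]

lemma phi_nonneg (hp : 0 ≤ p) (o : V) (S : Set V) : 0 ≤ phi G o p S :=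
  tsum_nonneg fun _ => mul_nonneg hp measureReal_nonneg

lemma phi_mono (hG : ∀ x, (G.incidenceSet x).Finite) (hp : 0 ≤ p) (hpq : p ≤ q) (hS : S.Finite) :
    phi G o p S ≤ phi G o q S := by
  have hF := (finite_incidentEdges hG hS).coe_toFinset.superset
  rw [phi_eq_sum hF, phi_eq_sum hF]
  gcongr
  · exact hp.trans hpq
  · exact prob_mono_param (fun _ => hpq) (isUpperSet_reachesEdge _ _ _)
      (isLocal_reachesEdge hG hS _).measurableSet

/-- The event that `C` is the cluster of `o` in `S` and that an open edge `e` leads from there to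
the starting point `y ∉ S` of a path which avoids `C` and leaves `D y`. -/
def LastExit (G : Graph V E) (S : Set V) (o : V) (D : V → Set V) (C : Set V) (e : E) :
    Set (E → Bool) :=
  {ω | clusterWithin G S o ω = C ∧ ω e = true ∧ ∃ x ∈ C, ∃ y ∉ S, G.IsLink e x y ∧
    Exits (within (OpenLink G ω) Cᶜ) (D y) y}

lemma exists_lastExit {D : V → Set V} (ho : o ∈ S) (hSB : S ⊆ B)
    (hD : ∀ x ∈ S, ∀ y ∉ S, G.Adj x y → D y ⊆ B) (h : Exits (OpenLink G ω) B o) :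
    ∃ e, ω ∈ LastExit G S o D (clusterWithin G S o ω) e := by
  obtain ⟨w, hw, how⟩ := h
  have hCS : clusterWithin G S o ω ⊆ S := clusterWithin_subset ho
  obtain ⟨x, hx, y, hy, ⟨e, he, hxy⟩, hyw⟩ :=
    exists_last_exit (R := clusterWithin G S o ω) how .refl fun h => hw (hSB (hCS h))
  have hyS : y ∉ S := fun hyS => hy (ReflTransGen.tail hx ⟨⟨e, he, hxy⟩, hCS hx, hyS⟩)
  exact ⟨e, rfl, he, x, hx, y, hyS, hxy, w, fun h => hw (hD x (hCS hx) y hyS ⟨e, hxy⟩ h), hyw⟩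

lemma prob_cluster_inter_open_inter_exits (hG : ∀ x, (G.incidenceSet x).Finite)
    (hp : p ∈ Icc (0 : ℝ) 1) (hS : S.Finite) (hB : B.Finite) {C : Set V} {e : E} {x y : V}
    (hx : x ∈ C) (hy : y ∉ S) (hxy : G.IsLink e x y) (z : V) :
    ℙ⟦p⟧ ({ω | clusterWithin G S o ω = C} ∩
        ({ω | ω e = true} ∩ {ω | Exits (within (OpenLink G ω) Cᶜ) B z})) =
      ℙ⟦p⟧ {ω | clusterWithin G S o ω = C} *
        (p * ℙ⟦p⟧ {ω | Exits (within (OpenLink G ω) Cᶜ) B z}) := by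
  have hCl := dependsOn_clusterWithin_eq (G := G) S C o
  have hOp := dependsOn_mem_coord true e
  have hEx := dependsOn_exits_within (G := G) B Cᶜ z
  have Op_measurable := (IsLocal.of_dependsOn hOp (finite_singleton e)).measurableSet
  have Ex_measurable := (IsLocal.of_dependsOn hEx
    ((finite_incidentEdges hG hB).inter_of_left _)).measurableSet
  have Cl_measurable := (IsLocal.of_dependsOn hCl
    ((finite_innerEdges hG hS).inter_of_left _)).measurableSet
  have notMem_inner : ∀ f ∈ incidentEdges G C, f ∉ innerEdges G Cᶜ := fun f hf hf' => by
    obtain ⟨z, hz, w, hzw⟩ := mem_iUnion₂.1 hf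
    exact mem_of_mem_innerEdges hf' hzw hz
  rw [prob_inter_of_dependsOn _ Cl_measurable (Op_measurable.inter Ex_measurable) hCl
      (dependsOn_mem_inter (hOp.mono subset_union_left) (hEx.mono subset_union_right))
      (disjoint_left.2 fun f hf hf' => hf'.elim ?_ fun h => notMem_inner f hf.2 h.2),
    prob_inter_of_dependsOn _ Op_measurable Ex_measurable hOp hEx
      (disjoint_singleton_left.2 fun h => notMem_inner e (mem_incidentEdges hxy hx) h.2),
    prob_open (P := fun _ => p) hp]
  rintro rfl
  exact hy (mem_of_mem_innerEdges hf.1 hxy.symm)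

lemma prob_lastExit_le (hG : ∀ x, (G.incidenceSet x).Finite) (hp : p ∈ Icc (0 : ℝ) 1)
    (hS : S.Finite) {D : V → Set V}
    (hD : ∀ x ∈ S, ∀ y ∉ S, G.Adj x y →
      (D y).Finite ∧ ℙ⟦p⟧ {ω | Exits (OpenLink G ω) (D y) y} ≤ θ)
    (hθ : 0 ≤ θ) {C : Set V} (hCS : C ⊆ S) (e : E) :
    ℙ⟦p⟧ (LastExit G S o D C e) ≤
      ℙ⟦p⟧ ({ω | clusterWithin G S o ω = C} ∩ ReachesEdge G S o e) * (p * θ) := by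
  by_cases h : ∃ x ∈ C, ∃ y ∉ S, G.IsLink e x y
  swap
  · have : LastExit G S o D C e = ∅ := eq_empty_of_forall_notMem
      fun ω ⟨_, _, x, hx, y, hy, hxy, _⟩ => h ⟨x, hx, y, hy, hxy⟩
    rw [this, measureReal_empty]
    exact mul_nonneg measureReal_nonneg (mul_nonneg hp.1 hθ)
  obtain ⟨x, hx, y, hy, hxy⟩ := h
  obtain ⟨hDy, hθy⟩ := hD x (hCS hx) y hy ⟨e, hxy⟩
  have lastExit_subset : LastExit G S o D C e ⊆ {ω | clusterWithin G S o ω = C} ∩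
      ({ω | ω e = true} ∩ {ω | Exits (within (OpenLink G ω) Cᶜ) (D y) y}) := by
    rintro ω ⟨hC, he, x', hx', y', hy', hxy', hex⟩
    rcases hxy.eq_and_eq_or_eq_and_eq hxy' with ⟨-, rfl⟩ | ⟨-, rfl⟩
    · exact ⟨hC, he, hex⟩
    · exact absurd (hCS hx') hy
  refine (measureReal_mono lastExit_subset).trans ?_
  rw [prob_cluster_inter_open_inter_exits hG hp hS hDy hx hy hxy]
  refine mul_le_mul (measureReal_mono ?_) (mul_le_mul_of_nonneg_left ?_ hp.1)
    (mul_nonneg hp.1 measureReal_nonneg) measureReal_nonneg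
  · exact fun ω (hω : _ = C) => ⟨hω, x, hω.symm ▸ hx, y, hy, hCS hx, hxy⟩
  · exact (measureReal_mono fun ω h => Exits.mono (fun _ _ _ h => h.1) h).trans hθy

lemma exits_subset_biUnion_lastExit {S : Finset V} (ho : o ∈ S) (hSB : (S : Set V) ⊆ B)
    {D : V → Set V} (hD : ∀ x ∈ S, ∀ y ∉ S, G.Adj x y → D y ⊆ B) {F : Finset E}
    (hF : incidentEdges G (S : Set V) ⊆ F) :
    {ω | Exits (OpenLink G ω) B o} ⊆
      ⋃ e ∈ F, ⋃ C ∈ S.powerset, LastExit G S o D C e := fun ω hω => by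
  obtain ⟨e, he⟩ := exists_lastExit ho hSB hD hω
  have hCS : clusterWithin G S o ω ⊆ S := clusterWithin_subset ho
  obtain ⟨C, hC⟩ := (S.finite_toSet.subset hCS).exists_finset_coe
  obtain ⟨x, hx, y, -, hxy, -⟩ := he.2.2
  rw [← hC] at he hCS
  exact mem_iUnion₂.2 ⟨e, hF (mem_incidentEdges hxy (hCS (hC ▸ hx))),
    mem_iUnion₂.2 ⟨C, Finset.mem_powerset.2 (by exact_mod_cast hCS), he⟩⟩

lemma prob_exits_le_phi_mul (hG : ∀ x, (G.incidenceSet x).Finite) (hp : p ∈ Icc (0 : ℝ) 1)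
    (ho : o ∈ S) (hSB : S ⊆ B) (hS : S.Finite) {D : V → Set V}
    (hD : ∀ x ∈ S, ∀ y ∉ S, G.Adj x y →
      (D y).Finite ∧ D y ⊆ B ∧ ℙ⟦p⟧ {ω | Exits (OpenLink G ω) (D y) y} ≤ θ)
    (hθ : 0 ≤ θ) :
    ℙ⟦p⟧ {ω | Exits (OpenLink G ω) B o} ≤ phi G o p S * θ := by
  classical
  lift S to Finset V using hS
  let F := (finite_incidentEdges hG S.finite_toSet).toFinset
  have hF : incidentEdges G (S : Set V) ⊆ F :=
    (finite_incidentEdges hG S.finite_toSet).coe_toFinset.superset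
  have exits_subset := exits_subset_biUnion_lastExit ho hSB
    (fun x hx y hy h => (hD x hx y hy h).2.1) hF
  calc ℙ⟦p⟧ {ω | Exits (OpenLink G ω) B o}
      ≤ ∑ e ∈ F, ∑ C ∈ S.powerset, ℙ⟦p⟧ (LastExit G S o D C e) :=
        ((measureReal_mono exits_subset (measure_ne_top _ _)).trans
          (measureReal_biUnion_finset_le _ _)).trans
          (Finset.sum_le_sum fun e _ => measureReal_biUnion_finset_le _ _)
    _ ≤ ∑ e ∈ F, ∑ C ∈ S.powerset,
          ℙ⟦p⟧ ({ω | clusterWithin G S o ω = C} ∩ ReachesEdge G S o e) * (p * θ) := by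
        gcongr with e _ C hC
        exact prob_lastExit_le hG hp S.finite_toSet
          (fun x hx y hy h => ⟨(hD x hx y hy h).1, (hD x hx y hy h).2.2⟩) hθ
          (by exact_mod_cast Finset.mem_powerset.1 hC) e
    _ ≤ ∑ e ∈ F, ℙ⟦p⟧ (ReachesEdge G S o e) * (p * θ) := by
        gcongr with e _
        rw [← Finset.sum_mul]
        refine mul_le_mul_of_nonneg_right (sum_measureReal_le_of_subset (fun C _ => ?_)
          ((pairwiseDisjoint_fiber (clusterWithin G S o) _).mono fun _ => inter_subset_left)
          fun _ _ => inter_subset_right) (mul_nonneg hp.1 hθ)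
        exact (IsLocal.of_dependsOn (dependsOn_clusterWithin_eq S C o)
          ((finite_innerEdges hG S.finite_toSet).inter_of_left _)).measurableSet.inter
          (isLocal_reachesEdge hG S.finite_toSet e).measurableSet
    _ = phi G o p S * θ := by
        rw [phi_eq_sum hF, Finset.sum_mul]
        exact Finset.sum_congr rfl fun e _ => by ring

lemma not_exits_eq_inter_reachesEdge_subset_closedPivotal (ho : o ∈ S) (e : E) :
    {ω | {x | ¬ Exits (OpenLink G ω) B x} = S} ∩ ReachesEdge G S o e ⊆
      ClosedPivotal {ω | Exits (OpenLink G ω) B o} e := by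
  classical
  rintro ω ⟨hS, x, hox, y, hy, -, hxy⟩
  rw [← show {x | ¬ Exits (OpenLink G ω) B x} = S from hS] at ho hy
  refine ⟨ho, ?_⟩
  let ω' := Function.update ω e true
  have le_update : ω ≤ ω' := le_update_iff.2 ⟨le_top, fun _ _ => le_rfl⟩
  have y_exits : Exits (OpenLink G ω') B y := (not_not.1 hy).mono fun _ _ _ => .mono le_update
  exact (y_exits.head ⟨e, Function.update_self .., hxy⟩).of_reflTransGen
    (ReflTransGen.mono (fun _ _ => OpenLink.mono le_update) _ _ (reflTransGen_of_within hox))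

lemma sum_prob_not_exits_eq {Q : Finset (Finset V)} (hB : B.Finite)
    (hG : ∀ x, (G.incidenceSet x).Finite) (hQ : ∀ S : Finset V, S ∈ Q ↔ o ∈ S ∧ (S : Set V) ⊆ B) :
    ∑ S ∈ Q, ℙ⟦p⟧ {ω | {x | ¬ Exits (OpenLink G ω) B x} = S} =
      1 - ℙ⟦p⟧ {ω | Exits (OpenLink G ω) B o} := by
  rw [← probReal_compl_eq_one_sub (isLocal_exits hG hB o).measurableSet,
    ← measureReal_biUnion_finset (pairwiseDisjoint_fiber _ _) fun S _ =>
      (IsLocal.of_dependsOn (dependsOn_not_exits_eq B S)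
        ((finite_incidentEdges hG hB).sdiff)).measurableSet]
  congr 1
  ext ω
  simp only [mem_iUnion₂, mem_ofPred_eq, mem_compl_iff, hQ, exists_prop]
  constructor
  · rintro ⟨S, ⟨ho, -⟩, hS⟩
    have : o ∈ {x | ¬ Exits (OpenLink G ω) B x} := hS ▸ ho
    exact this
  · intro ho
    have subset_B : {x | ¬ Exits (OpenLink G ω) B x} ⊆ B := fun x hx =>
      not_not.1 fun h => hx (.of_notMem h)
    obtain ⟨S, hS⟩ := (hB.subset subset_B).exists_finset_coe
    exact ⟨S, ⟨Finset.mem_coe.1 (hS ▸ ho), hS ▸ subset_B⟩, hS.symm⟩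

lemma one_sub_prob_exits_le_sum_closedPivotal (hG : ∀ x, (G.incidenceSet x).Finite) (hp : 0 ≤ p)
    (hB : B.Finite) (hphi : ∀ S : Finset V, o ∈ S → 1 ≤ phi G o p S) {F : Finset E}
    (hF : incidentEdges G B ⊆ F) :
    1 - ℙ⟦p⟧ {ω | Exits (OpenLink G ω) B o} ≤
      p * ∑ e ∈ F, ℙ⟦p⟧ (ClosedPivotal {ω | Exits (OpenLink G ω) B o} e) := by
  classical
  let Q : Finset (Finset V) := hB.toFinset.powerset.filter fun S => o ∈ S
  have hQ : ∀ S : Finset V, S ∈ Q ↔ o ∈ S ∧ (S : Set V) ⊆ B := fun S => by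
    simp [Q, and_comm, ← Finset.coe_subset]
  let N : Finset V → Set (E → Bool) := fun S => {ω | {x | ¬ Exits (OpenLink G ω) B x} = S}
  have hN : ∀ S, DependsOn (· ∈ N S) (incidentEdges G B \ innerEdges G S) := fun S =>
    dependsOn_not_exits_eq B S
  have N_measurable : ∀ S, MeasurableSet (N S) := fun S =>
    (IsLocal.of_dependsOn (hN S) (finite_incidentEdges hG hB).sdiff).measurableSet
  have reachesEdge_measurable : ∀ (S : Finset V) e, MeasurableSet (ReachesEdge G S o e) :=
    fun S e => (isLocal_reachesEdge hG S.finite_toSet e).measurableSet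
  calc 1 - ℙ⟦p⟧ {ω | Exits (OpenLink G ω) B o} = ∑ S ∈ Q, ℙ⟦p⟧ (N S) :=
        (sum_prob_not_exits_eq hB hG hQ).symm
    _ ≤ ∑ S ∈ Q, ℙ⟦p⟧ (N S) * phi G o p S := Finset.sum_le_sum fun S hS =>
        le_mul_of_one_le_right measureReal_nonneg (hphi S ((hQ S).1 hS).1)
    _ = p * ∑ e ∈ F, ∑ S ∈ Q, ℙ⟦p⟧ (N S ∩ ReachesEdge G S o e) := by
        rw [Finset.sum_comm, Finset.mul_sum]
        refine Finset.sum_congr rfl fun S hS => ?_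
        rw [phi_eq_sum ((incidentEdges_mono ((hQ S).1 hS).2).trans hF), Finset.mul_sum,
          Finset.mul_sum]
        refine Finset.sum_congr rfl fun e _ => ?_
        rw [prob_inter_of_dependsOn _ (N_measurable S) (reachesEdge_measurable S e) (hN S)
          (dependsOn_reachesEdge S o e) disjoint_sdiff_left]
        ring
    _ ≤ p * ∑ e ∈ F, ℙ⟦p⟧ (ClosedPivotal {ω | Exits (OpenLink G ω) B o} e) := by
        gcongr with e _
        exact sum_measureReal_le_of_subset
          (fun S _ => (N_measurable S).inter (reachesEdge_measurable S e))
          ((pairwiseDisjoint_fiber _ _).mono fun _ => inter_subset_left)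
          fun S hS => not_exits_eq_inter_reachesEdge_subset_closedPivotal ((hQ S).1 hS).1 e

lemma one_sub_exp_le_of_one_sub_le_deriv {f f' : ℝ → ℝ} {a b : ℝ} (hab : a ≤ b)
    (hf : ∀ x ∈ Icc a b, HasDerivAt f (f' x) x) (hf' : ∀ x ∈ Icc a b, 1 - f x ≤ f' x)
    (ha : 0 ≤ f a) : 1 - Real.exp (-(b - a)) ≤ f b := by
  have deriv_g : ∀ x ∈ Icc a b, HasDerivAt (fun x => (1 - f x) * Real.exp x)
      (-f' x * Real.exp x + (1 - f x) * Real.exp x) x := fun x hx =>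
    ((hf x hx).const_sub 1).mul (Real.hasDerivAt_exp x)
  have antitone_g : AntitoneOn (fun x => (1 - f x) * Real.exp x) (Icc a b) := by
    refine antitoneOn_of_hasDerivWithinAt_nonpos (convex_Icc a b)
      (fun x hx => (deriv_g x hx).continuousAt.continuousWithinAt)
      (fun x hx => (deriv_g x (interior_subset hx)).hasDerivWithinAt) fun x hx => ?_
    rw [← add_mul]
    exact mul_nonpos_of_nonpos_of_nonneg (by linarith [hf' x (interior_subset hx)])
      (Real.exp_pos x).le
  have g_le : (1 - f b) * Real.exp b ≤ Real.exp a :=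
    (antitone_g (left_mem_Icc.2 hab) (right_mem_Icc.2 hab) hab).trans
      (mul_le_of_le_one_left (Real.exp_pos a).le (by linarith))
  rw [neg_sub, Real.exp_sub, sub_le_comm]
  exact (le_div_iff₀ (Real.exp_pos b)).2 g_le

lemma one_sub_exp_le_prob_exits (hG : ∀ x, (G.incidenceSet x).Finite) (hp : 0 < p) (hpq : p ≤ q)
    (hq : q < 1) (hB : B.Finite) (hphi : ∀ S : Finset V, o ∈ S → 1 ≤ phi G o p S) :
    1 - Real.exp (-(q - p)) ≤ ℙ⟦q⟧ {ω | Exits (OpenLink G ω) B o} := by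
  have hF := (finite_incidentEdges hG hB).coe_toFinset
  refine one_sub_exp_le_of_one_sub_le_deriv (f := fun r => ℙ⟦r⟧ {ω | Exits (OpenLink G ω) B o}) hpq
    (fun r hr => russo_formula ⟨hp.trans_le hr.1, hr.2.trans_lt hq⟩
      (isUpperSet_exits B o) (hF ▸ dependsOn_exits B o)) (fun r hr => ?_) measureReal_nonneg
  have hr0 := hp.trans_le hr.1
  have hr1 := hr.2.trans_lt hq
  refine (one_sub_prob_exits_le_sum_closedPivotal hG hr0.le hB (fun S ho =>
    (hphi S ho).trans (phi_mono hG hp.le hr.1 S.finite_toSet)) hF.superset).trans ?_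
  have sum_nonneg := Finset.sum_nonneg fun e (_ : e ∈ (finite_incidentEdges hG hB).toFinset) =>
    measureReal_nonneg (μ := percMeasure fun _ => r)
      (s := ClosedPivotal {ω | Exits (OpenLink G ω) B o} e)
  rw [le_div_iff₀ (sub_pos.2 hr1)]
  nlinarith [mul_nonneg sum_nonneg hr0.le, mul_nonneg sum_nonneg (sub_nonneg.2 hr1.le)]

end DuminilCopinTassion

section InfiniteClusters

open Relation Filter

lemma infinitePi_eq_zero_or_one_of_dependsOn_compl {ι : Type*} {X : ι → Type*}
    [∀ i, MeasurableSpace (X i)] (μ : ∀ i, Measure (X i)) [∀ i, IsProbabilityMeasure (μ i)]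
    {A : Set (∀ i, X i)} (hA : MeasurableSet A)
    (hA' : ∀ F : Finset ι, DependsOn (· ∈ A) (F : Set ι)ᶜ) :
    Measure.infinitePi μ A = 0 ∨ Measure.infinitePi μ A = 1 := by
  classical
  have tail_measurable : MeasurableSet[limsup
      (fun i => MeasurableSpace.comap (Function.eval i) inferInstance) cofinite] A := by
    rw [limsup_eq_iInf_iSup]
    simp only [MeasurableSpace.measurableSet_iInf]
    intro s hs
    have hs' : sᶜ.Finite := hs
    exact measurableSet_iSup_comap_eval hA
      ((hA' hs'.toFinset).mono (by rw [hs'.coe_toFinset, compl_compl]))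
  exact ProbabilityTheory.measure_zero_or_one_of_measurableSet_limsup
    (p := Set.Finite) (ns := fun F : Finset ι => (F : Set ι))
    (fun i => (measurable_pi_apply i).comap_le)
    (ProbabilityTheory.iIndepFun_infinitePi (P := μ) (X := fun _ x => x) fun _ => measurable_id)
    (fun t ht => by simpa using ht)
    (directed_of_isDirected_le fun _ _ => Finset.coe_subset.2) Finset.finite_toSet
    (fun i => ⟨{i}, by simp⟩) tail_measurable

variable {V E : Type*} {G : Graph V E} {ω ω' : E → Bool} {x y : V}

/-- The set of vertices connected to `x` by open edges. -/
def openCluster (G : Graph V E) (ω : E → Bool) (x : V) : Set V :=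
  {y | ReflTransGen (OpenLink G ω) x y}

lemma infinite_openCluster_iff_exits :
    (openCluster G ω x).Infinite ↔ ∀ B : Finset V, Exits (OpenLink G ω) B x := by
  refine ⟨fun h B => ?_, fun h hfin => ?_⟩
  · obtain ⟨y, hy, hyB⟩ := h.exists_notMem_finset B
    exact ⟨y, hyB, hy⟩
  · obtain ⟨y, hy, hxy⟩ := h hfin.toFinset
    exact hy (hfin.mem_toFinset.2 hxy)

lemma setOf_infinite_openCluster (x : V) : {ω | (openCluster G ω x).Infinite} =
    ⋂ B : Finset V, {ω | Exits (OpenLink G ω) B x} := by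
  ext ω
  simp only [mem_ofPred_eq, mem_iInter, infinite_openCluster_iff_exits]

lemma measurableSet_infinite_openCluster [Countable V] (hG : ∀ x, (G.incidenceSet x).Finite)
    (x : V) : MeasurableSet {ω | (openCluster G ω x).Infinite} := by
  rw [setOf_infinite_openCluster]
  exact .iInter fun B => (isLocal_exits hG B.finite_toSet x).measurableSet

lemma le_prob_infinite_openCluster [Countable V] (hG : ∀ x, (G.incidenceSet x).Finite)
    {P : E → ℝ} {c : ℝ} (hc : ∀ B : Finset V, c ≤ ℙ[P] {ω | Exits (OpenLink G ω) B x}) :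
    c ≤ ℙ[P] {ω | (openCluster G ω x).Infinite} := by
  rw [setOf_infinite_openCluster]
  have anti : Antitone fun B : Finset V => {ω | Exits (OpenLink G ω) B x} :=
    fun B B' h ω => Exits.anti (Finset.coe_subset.2 h)
  have lim := tendsto_measure_iInter_atTop (μ := percMeasure P)
    (fun B => (isLocal_exits hG B.finite_toSet x).measurableSet.nullMeasurableSet) anti
    ⟨∅, measure_ne_top _ _⟩
  exact ge_of_tendsto' ((ENNReal.tendsto_toReal (measure_ne_top _ _)).comp lim) hc

lemma finite_setOf_inc (G : Graph V E) (e : E) : {x | G.Inc e x}.Finite := by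
  rcases {x | G.Inc e x}.eq_empty_or_nonempty with h | ⟨x, y, hxy⟩
  · rw [h]
    exact finite_empty
  · refine ({x, y} : Set V).toFinite.subset fun z ⟨w, hzw⟩ => ?_
    rcases hzw.left_eq_or_eq hxy with rfl | rfl <;> simp

lemma exists_mem_openCluster_of_eqOn_compl {F : Set E} (hω : ∀ e ∉ F, ω e = ω' e)
    (hy : y ∈ openCluster G ω x) :
    ∃ w ∈ insert x (⋃ e ∈ F, {v | G.Inc e v}), y ∈ openCluster G ω' w := by
  induction hy with
  | refl => exact ⟨x, mem_insert _ _, .refl⟩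
  | @tail y z _ hyz ih =>
    obtain ⟨e, he, h⟩ := hyz
    by_cases heF : e ∈ F
    · exact ⟨z, mem_insert_of_mem _ (mem_biUnion heF h.inc_right), .refl⟩
    · obtain ⟨w, hw, hwy⟩ := ih
      exact ⟨w, hw, hwy.tail ⟨e, hω e heF ▸ he, h⟩⟩

lemma dependsOn_exists_infinite_openCluster (F : Finset E) :
    DependsOn (· ∈ {ω | ∃ x, (openCluster G ω x).Infinite}) (F : Set E)ᶜ := by
  refine dependsOn_mem_of_imp fun ω ω' hω ⟨x, hx⟩ => ?_
  have cover : openCluster G ω x ⊆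
      ⋃ w ∈ insert x (⋃ e ∈ (F : Set E), {v | G.Inc e v}), openCluster G ω' w := fun y hy =>
    mem_iUnion₂.2 (by simpa only [exists_prop] using exists_mem_openCluster_of_eqOn_compl hω hy)
  have finite_sources : (insert x (⋃ e ∈ (F : Set E), {v | G.Inc e v})).Finite :=
    (F.finite_toSet.biUnion fun e _ => finite_setOf_inc G e).insert x
  by_contra h
  exact hx ((finite_sources.biUnion fun w _ => not_infinite.1 fun hw => h ⟨w, hw⟩).subset cover)

lemma exists_one_sub_lt_prob_infinite_openCluster [Countable V]
    (hG : ∀ x, (G.incidenceSet x).Finite) {P : E → ℝ}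
    (hP : ℙ[P] {ω | (openCluster G ω x).Infinite} ≠ 0) {ε : ℝ} (hε : 0 < ε) :
    ∃ R : Finset V, 1 - ε < ℙ[P] {ω | ∃ x ∈ R, (openCluster G ω x).Infinite} := by
  have measurable_infinite := measurableSet_infinite_openCluster (G := G) hG
  have exists_eq : {ω | ∃ x, (openCluster G ω x).Infinite} =
      ⋃ R : Finset V, {ω | ∃ x ∈ R, (openCluster G ω x).Infinite} := by
    ext ω
    simp only [mem_ofPred_eq, mem_iUnion]
    exact ⟨fun ⟨x, hx⟩ => ⟨{x}, x, by simp, hx⟩, fun ⟨_, x, _, hx⟩ => ⟨x, hx⟩⟩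
  have measurable_exists : MeasurableSet {ω | ∃ x, (openCluster G ω x).Infinite} := by
    simpa only [ofPred_exists] using .iUnion measurable_infinite
  have prob_exists : percMeasure P {ω | ∃ x, (openCluster G ω x).Infinite} = 1 := by
    have zero_or_one := infinitePi_eq_zero_or_one_of_dependsOn_compl (fun e => coin (P e))
      measurable_exists dependsOn_exists_infinite_openCluster
    rw [← percMeasure_eq_infinitePi] at zero_or_one
    have le_exists : percMeasure P {ω | (openCluster G ω x).Infinite} ≤
        percMeasure P {ω | ∃ x, (openCluster G ω x).Infinite} := measure_mono fun ω hω => ⟨x, hω⟩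
    refine zero_or_one.resolve_left fun h => hP ?_
    rw [measureReal_def, le_antisymm (le_exists.trans h.le) zero_le, ENNReal.toReal_zero]
  have mono : Monotone fun R : Finset V => {ω | ∃ x ∈ R, (openCluster G ω x).Infinite} :=
    fun R R' h ω ⟨x, hx, hω⟩ => ⟨x, h hx, hω⟩
  have lim := tendsto_measure_iUnion_atTop (μ := percMeasure P) mono
  rw [← exists_eq, prob_exists] at lim
  have lim' := (ENNReal.tendsto_toReal ENNReal.one_ne_top).comp lim
  exact (lim'.eventually_const_lt (by simpa using hε)).exists

end InfiniteClusters

section Arms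

open Relation

variable {V E : Type*} {G : Graph V E} {R S : Set V}

/-- The steps of `r` that start in `R`. A path of such steps stays in `R`, except that it may end
outside. -/
def startingIn (r : V → V → Prop) (R : Set V) : V → V → Prop :=
  fun x y => x ∈ R ∧ r x y

lemma Exits.exists_startingIn {r : V → V → Prop} {x : V} (h : Exits r R x) :
    ∃ y ∉ R, ReflTransGen (startingIn r R) x y := by
  induction h using Exits.induction_on with
  | notMem y hy => exact ⟨y, hy, .refl⟩
  | head y hy z hyz _ ih =>
    obtain ⟨w, hw, hzw⟩ := ih
    exact ⟨w, hw, hzw.head ⟨hy, hyz⟩⟩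

lemma exits_of_reflTransGen_startingIn {r : V → V → Prop} {x y : V}
    (h : ReflTransGen (startingIn r R) x y) (hy : y ∉ S) : Exits r S x :=
  ⟨y, hy, ReflTransGen.mono (fun _ _ h => h.2) _ _ h⟩

lemma Exits.exists_within {r : V → V → Prop} {x : V} (hRS : ∀ y ∈ R, ∀ z, r y z → z ∈ S)
    (hx : x ∈ S) (h : Exits r R x) : ∃ y ∈ S \ R, ReflTransGen (within r S) x y := by
  induction h using Exits.induction_on with
  | notMem y hy => exact ⟨y, ⟨hx, hy⟩, .refl⟩
  | head y hy z hyz _ ih =>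
    obtain ⟨w, hw, hzw⟩ := ih (hRS y hy z hyz)
    exact ⟨w, hw, hzw.head ⟨hyz, hx, hRS y hy z hyz⟩⟩

lemma reflTransGen_within_of_startingIn {r : V → V → Prop} {x y : V} (hRS : R ⊆ S) (hy : y ∈ S)
    (h : ReflTransGen (startingIn r R) x y) : ReflTransGen (within r S) x y := by
  induction h using ReflTransGen.head_induction_on with
  | refl => exact .refl
  | @head x z hxz hzy ih =>
    refine ih.head ⟨hxz.2, hRS hxz.1, ?_⟩
    rcases hzy.cases_head with rfl | ⟨_, hz, -⟩
    · exact hy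
    · exact hRS hz.1

/-- The event that an open path leads from `X` to `Z`, inside `R` except possibly for its end. -/
def Arm (G : Graph V E) (X R Z : Set V) : Set (E → Bool) :=
  {ω | ∃ x ∈ X, ∃ z ∈ Z, ReflTransGen (startingIn (OpenLink G ω) R) x z}

variable {X Z : Set V}

lemma dependsOn_arm (X R Z : Set V) : DependsOn (· ∈ Arm G X R Z) (incidentEdges G R) :=
  dependsOn_mem_of_imp fun _ _ hω ⟨x, hx, z, hz, h⟩ => ⟨x, hx, z, hz, ReflTransGen.mono
    (fun _ _ h => ⟨h.1, h.2.congr fun e he => hω e (mem_incidentEdges he h.1)⟩) _ _ h⟩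

lemma isLocal_arm (hG : ∀ x, (G.incidenceSet x).Finite) (hR : R.Finite) :
    IsLocal (Arm G X R Z) :=
  .of_dependsOn (dependsOn_arm X R Z) (finite_incidentEdges hG hR)

lemma isUpperSet_arm : IsUpperSet (Arm G X R Z) :=
  fun _ _ hω ⟨x, hx, z, hz, h⟩ => ⟨x, hx, z, hz,
    ReflTransGen.mono (fun _ _ h => ⟨h.1, h.2.mono hω⟩) _ _ h⟩

end Arms

section Symmetry

open Relation

variable {V E : Type*} {G : Graph V E} {σ : V ≃ V} {τ : E ≃ E}

/-- The pair of bijections `σ` of the vertices and `τ` of the edges is an automorphism of `G`. -/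
def IsAutomorphism (G : Graph V E) (σ : V ≃ V) (τ : E ≃ E) : Prop :=
  ∀ e x y, G.IsLink (τ e) (σ x) (σ y) ↔ G.IsLink e x y

lemma IsAutomorphism.openLink_comp (h : IsAutomorphism G σ τ) (ω : E → Bool) (x y : V) :
    OpenLink G (ω ∘ τ) x y ↔ OpenLink G ω (σ x) (σ y) := by
  refine ⟨fun ⟨e, ho, he⟩ => ⟨τ e, ho, (h e x y).2 he⟩, fun ⟨e, ho, he⟩ => ⟨τ.symm e, ?_, ?_⟩⟩
  · simpa using ho
  · simpa using (h (τ.symm e) x y).1 (by simpa using he)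

lemma reflTransGen_equiv {W : Type*} (σ : V ≃ W) {r : V → V → Prop} {s : W → W → Prop}
    (hrs : ∀ x y, r x y ↔ s (σ x) (σ y)) (x y : V) :
    ReflTransGen r x y ↔ ReflTransGen s (σ x) (σ y) := by
  refine ⟨ReflTransGen.lift σ (fun a b => (hrs a b).1) x y, fun h => ?_⟩
  simpa [Function.onFun] using ReflTransGen.lift (p := r) σ.symm
    (fun a b hab => (hrs _ _).2 (by simpa using hab)) _ _ h

lemma IsAutomorphism.prob_arm (h : IsAutomorphism G σ τ) (hG : ∀ x, (G.incidenceSet x).Finite)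
    {R : Set V} (hR : R.Finite) (p : ℝ) (X Z : Set V) :
    ℙ⟦p⟧ (Arm G (σ ⁻¹' X) (σ ⁻¹' R) (σ ⁻¹' Z)) = ℙ⟦p⟧ (Arm G X R Z) := by
  have comp_mem : ∀ ω : E → Bool,
      ω ∘ τ ∈ Arm G (σ ⁻¹' X) (σ ⁻¹' R) (σ ⁻¹' Z) ↔ ω ∈ Arm G X R Z := fun ω => by
    have := reflTransGen_equiv σ (r := startingIn (OpenLink G (ω ∘ τ)) (σ ⁻¹' R))
      (s := startingIn (OpenLink G ω) R) fun x y => and_congr Iff.rfl (h.openLink_comp ω x y)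
    exact σ.exists_congr fun x => and_congr Iff.rfl <|
      σ.exists_congr fun z => and_congr Iff.rfl (this x z)
  have measurable_arm : MeasurableSet (Arm G (σ ⁻¹' X) (σ ⁻¹' R) (σ ⁻¹' Z)) :=
    (isLocal_arm hG (hR.preimage σ.injective.injOn)).measurableSet
  have := prob_preimage_comp τ.injective (fun _ => p) measurable_arm
  simp only [comp_mem] at this
  exact this.symm

lemma IsAutomorphism.prob_exits (h : IsAutomorphism G σ τ) (hG : ∀ x, (G.incidenceSet x).Finite)
    {R : Set V} (hR : R.Finite) (p : ℝ) (x : V) :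
    ℙ⟦p⟧ {ω | Exits (OpenLink G ω) (σ ⁻¹' R) x} = ℙ⟦p⟧ {ω | Exits (OpenLink G ω) R (σ x)} := by
  have exits_eq_arm : ∀ (R : Set V) (x : V),
      {ω | Exits (OpenLink G ω) R x} = Arm G {x} R Rᶜ := fun R x => by
    ext ω
    refine ⟨fun hx => ⟨x, rfl, hx.exists_startingIn⟩, ?_⟩
    rintro ⟨_, rfl, y, hy, hxy⟩
    exact exits_of_reflTransGen_startingIn hxy hy
  rw [exits_eq_arm, exits_eq_arm, ← h.prob_arm hG hR, preimage_compl]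
  congr
  ext; simp

end Symmetry

/-- The unit vector along the first (`false`) or the second (`true`) coordinate axis of `ℤ²`. -/
def step : Bool → ℤ × ℤ
  | false => (1, 0)
  | true => (0, 1)

/-- The square lattice on `ℤ²`, whose edge `(x, d)` joins `x` to `x + step d`. -/
def squareLattice : Graph (ℤ × ℤ) ((ℤ × ℤ) × Bool) where
  vertexSet := univ
  IsLink e x y := (x = e.1 ∧ y = e.1 + step e.2) ∨ (y = e.1 ∧ x = e.1 + step e.2)
  isLink_symm _ _ := ⟨fun _ _ => Or.symm⟩
  eq_or_eq_of_isLink_of_isLink := by grind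
  left_mem_of_isLink _ _ _ _ := mem_univ _

local notation "𝕃" => squareLattice

section SquareLattice

open Relation

lemma isLink_squareLattice (e : (ℤ × ℤ) × Bool) : squareLattice.IsLink e e.1 (e.1 + step e.2) :=
  .inl ⟨rfl, rfl⟩

lemma finite_incidenceSet_squareLattice (x : ℤ × ℤ) : (squareLattice.incidenceSet x).Finite := by
  refine (((finite_singleton x).union
    ((finite_singleton (x - step false)).union (finite_singleton (x - step true)))).prod
      finite_univ).subset ?_
  rintro ⟨v, d⟩ ⟨y, ⟨rfl, -⟩ | ⟨-, rfl⟩⟩ <;> cases d <;> simp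

variable {ω : (ℤ × ℤ) × Bool → Bool} {x y c : ℤ × ℤ} {m n : ℤ}

lemma openLink_squareLattice_iff :
    OpenLink 𝕃 ω x y ↔
      (y.2 = x.2 ∧ y.1 = x.1 + 1 ∧ ω (x, false)) ∨ (y.2 = x.2 ∧ x.1 = y.1 + 1 ∧ ω (y, false)) ∨
      (y.1 = x.1 ∧ y.2 = x.2 + 1 ∧ ω (x, true)) ∨ (y.1 = x.1 ∧ x.2 = y.2 + 1 ∧ ω (y, true)) := by
  constructor
  · rintro ⟨⟨v, d⟩, ho, ⟨rfl, rfl⟩ | ⟨rfl, rfl⟩⟩ <;> cases d <;> simp [step, ho]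
  · rintro (⟨h, h', ho⟩ | ⟨h, h', ho⟩ | ⟨h, h', ho⟩ | ⟨h, h', ho⟩)
    exacts [⟨_, ho, .inl ⟨rfl, by ext <;> simp [step, h, h']⟩⟩,
      ⟨_, ho, .inr ⟨rfl, by ext <;> simp [step, h, h']⟩⟩,
      ⟨_, ho, .inl ⟨rfl, by ext <;> simp [step, h, h']⟩⟩,
      ⟨_, ho, .inr ⟨rfl, by ext <;> simp [step, h, h']⟩⟩]

/-- The box of radius `n` around `c` in `ℤ²`. -/
def box (c : ℤ × ℤ) (n : ℤ) : Set (ℤ × ℤ) := Icc (c.1 - n, c.2 - n) (c.1 + n, c.2 + n)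

lemma mem_box : x ∈ box c n ↔
    (c.1 - n ≤ x.1 ∧ x.1 ≤ c.1 + n) ∧ c.2 - n ≤ x.2 ∧ x.2 ≤ c.2 + n := by
  simp only [box, mem_Icc, Prod.le_def]
  tauto

lemma finite_box (c : ℤ × ℤ) (n : ℤ) : (box c n).Finite := finite_Icc _ _

lemma box_mono (c : ℤ × ℤ) (h : m ≤ n) : box c m ⊆ box c n := fun x => by
  simp only [mem_box]
  omega

lemma exists_subset_box (R : Finset (ℤ × ℤ)) : ∃ n : ℕ, (R : Set (ℤ × ℤ)) ⊆ box 0 n := by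
  refine ⟨∑ x ∈ R, (x.1.natAbs + x.2.natAbs), fun x hx => mem_box.2 ?_⟩
  have := Finset.single_le_sum (f := fun x : ℤ × ℤ => x.1.natAbs + x.2.natAbs) (by simp)
    (Finset.mem_coe.1 hx)
  simp only [Prod.fst_zero, Prod.snd_zero]
  omega

/-- The outer boundary of the box of radius `n` around `c` to the right, above, to the left of and
below the box, respectively. -/
def face (c : ℤ × ℤ) (n : ℤ) : Fin 4 → Set (ℤ × ℤ)
  | 0 => {x | x.1 = c.1 + n + 1 ∧ c.2 - n ≤ x.2 ∧ x.2 ≤ c.2 + n}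
  | 1 => {x | x.2 = c.2 + n + 1 ∧ c.1 - n ≤ x.1 ∧ x.1 ≤ c.1 + n}
  | 2 => {x | x.1 = c.1 - n - 1 ∧ c.2 - n ≤ x.2 ∧ x.2 ≤ c.2 + n}
  | 3 => {x | x.2 = c.2 - n - 1 ∧ c.1 - n ≤ x.1 ∧ x.1 ≤ c.1 + n}

lemma OpenLink.exists_mem_face (h : OpenLink 𝕃 ω x y) (hx : x ∈ box c n) (hy : y ∉ box c n) :
    ∃ i, y ∈ face c n i := by
  rw [openLink_squareLattice_iff] at h
  simp only [mem_box, Fin.exists_fin_succ, face, mem_ofPred_eq] at *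
  grind

/-- The event that an open path inside the box of radius `n` around `c` leads from the box of radius
`m` to the face `i` of the larger box. -/
def boxArm (c : ℤ × ℤ) (m n : ℤ) (i : Fin 4) : Set ((ℤ × ℤ) × Bool → Bool) :=
  Arm 𝕃 (box c m) (box c n) (face c n i)

lemma isLocal_boxArm (c : ℤ × ℤ) (m n : ℤ) (i : Fin 4) : IsLocal (boxArm c m n i) :=
  isLocal_arm finite_incidenceSet_squareLattice (finite_box c n)

lemma isUpperSet_boxArm (c : ℤ × ℤ) (m n : ℤ) (i : Fin 4) : IsUpperSet (boxArm c m n i) :=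
  isUpperSet_arm

lemma exists_mem_boxArm_of_infinite (hmn : m ≤ n) (hx : x ∈ box c m)
    (h : (openCluster 𝕃 ω x).Infinite) : ∃ i, ω ∈ boxArm c m n i := by
  obtain ⟨y, hy, hxy⟩ := (Exits.exists_startingIn
    (infinite_openCluster_iff_exits.1 h (finite_box c n).toFinset))
  rw [Finite.coe_toFinset] at hy hxy
  obtain rfl | ⟨z, -, hz, hzy⟩ := hxy.cases_tail
  · exact (hy (box_mono c hmn hx)).elim
  · obtain ⟨i, hi⟩ := hzy.exists_mem_face hz hy
    exact ⟨i, x, hx, y, hi, hxy⟩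

lemma isAutomorphism_translation (c : ℤ × ℤ) :
    IsAutomorphism 𝕃 (Equiv.addRight c) ((Equiv.addRight c).prodCongr (.refl Bool)) := by
  simp [IsAutomorphism, squareLattice, add_right_comm _ c]

/-- The rotation of `ℤ²` by a quarter turn. -/
def quarterTurn : ℤ × ℤ ≃ ℤ × ℤ where
  toFun x := (-x.2, x.1)
  invFun x := (x.2, -x.1)
  left_inv _ := by simp
  right_inv _ := by simp

/-- The action of `quarterTurn` on the edges of the square lattice. -/
def edgeQuarterTurn : (ℤ × ℤ) × Bool ≃ (ℤ × ℤ) × Bool where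
  toFun
    | (x, false) => (quarterTurn x, true)
    | (x, true) => (quarterTurn x - step false, false)
  invFun
    | (x, false) => (quarterTurn.symm (x + step false), true)
    | (x, true) => (quarterTurn.symm x, false)
  left_inv := by rintro ⟨x, _ | _⟩ <;> simp
  right_inv := by rintro ⟨x, _ | _⟩ <;> simp

lemma isAutomorphism_quarterTurn : IsAutomorphism 𝕃 quarterTurn edgeQuarterTurn := by
  rintro ⟨v, _ | _⟩ x y <;>
    simp only [squareLattice, edgeQuarterTurn, quarterTurn, step, Equiv.coe_fn_mk, Prod.ext_iff,
      Prod.fst_add, Prod.snd_add, Prod.fst_sub, Prod.snd_sub] <;> omega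

lemma preimage_addRight_box (c : ℤ × ℤ) (n : ℤ) : Equiv.addRight c ⁻¹' box c n = box 0 n := by
  ext x
  simp only [mem_preimage, mem_box, Equiv.coe_addRight, Prod.fst_add, Prod.snd_add,
    Prod.fst_zero, Prod.snd_zero]
  omega

lemma prob_boxArm_translate (p : ℝ) (c : ℤ × ℤ) (m n : ℤ) (i : Fin 4) :
    ℙ⟦p⟧ (boxArm c m n i) = ℙ⟦p⟧ (boxArm 0 m n i) := by
  have preimage_face : Equiv.addRight c ⁻¹' face c n i = face 0 n i := by
    ext x
    fin_cases i <;> simp [face] <;> omega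
  rw [boxArm, ← (isAutomorphism_translation c).prob_arm finite_incidenceSet_squareLattice
    (finite_box c n), preimage_addRight_box, preimage_addRight_box, preimage_face, boxArm]

lemma prob_boxArm_succ (p : ℝ) (m n : ℤ) (i : Fin 4) :
    ℙ⟦p⟧ (boxArm 0 m n (i + 1)) = ℙ⟦p⟧ (boxArm 0 m n i) := by
  have preimage_box : ∀ n, quarterTurn ⁻¹' box 0 n = box 0 n := fun n => by
    ext x
    simp only [mem_preimage, mem_box, quarterTurn, Equiv.coe_fn_mk, Prod.fst_zero, Prod.snd_zero]
    omega
  have preimage_face : quarterTurn ⁻¹' face 0 n (i + 1) = face 0 n i := by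
    ext x
    fin_cases i <;> simp [face, quarterTurn] <;> omega
  rw [boxArm, ← isAutomorphism_quarterTurn.prob_arm finite_incidenceSet_squareLattice
    (finite_box 0 n), preimage_box, preimage_box, preimage_face, boxArm]

lemma prob_boxArm_eq (p : ℝ) (c : ℤ × ℤ) (m n : ℤ) (i j : Fin 4) :
    ℙ⟦p⟧ (boxArm c m n i) = ℙ⟦p⟧ (boxArm 0 m n j) := by
  have eq_zero : ∀ i : Fin 4, ℙ⟦p⟧ (boxArm 0 m n i) = ℙ⟦p⟧ (boxArm 0 m n 0) := fun i => by
    induction i using Fin.induction with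
    | zero => rfl
    | succ i ih => rw [← Fin.coeSucc_eq_succ, prob_boxArm_succ, ih]
  rw [prob_boxArm_translate, eq_zero i, eq_zero j]

/-- The square-root trick: one of the four arms occurs with a probability close to one, hence by
symmetry and Harris' inequality so does each of them. -/
lemma exists_one_sub_lt_prob_boxArm {p ε : ℝ} (hε : 0 < ε)
    (hp : ℙ⟦p⟧ {ω | (openCluster 𝕃 ω 0).Infinite} ≠ 0) :
    ∃ m : ℕ, ∀ n : ℤ, m ≤ n → ∀ c i, 1 - ε < ℙ⟦p⟧ (boxArm c m n i) := by
  obtain ⟨R, hR⟩ := exists_one_sub_lt_prob_infinite_openCluster finite_incidenceSet_squareLattice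
    hp (pow_pos hε 4)
  obtain ⟨m, hm⟩ := exists_subset_box R
  refine ⟨m, fun n hmn c i => ?_⟩
  have le_union : ℙ⟦p⟧ {ω | ∃ x ∈ R, (openCluster 𝕃 ω x).Infinite} ≤
      ℙ⟦p⟧ (⋃ j ∈ Finset.univ, boxArm 0 m n j) :=
    measureReal_mono (fun ω ⟨x, hx, h⟩ => by
      simpa using exists_mem_boxArm_of_infinite hmn (hm hx) h) (measure_ne_top _ _)
  have square_root_trick := prod_one_sub_prob_le (fun _ => p) Finset.univ
    (fun j _ => isUpperSet_boxArm 0 m n j) (fun j _ => isLocal_boxArm 0 m n j)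
  simp only [prob_boxArm_eq p 0 m n _ i, Finset.prod_const, Finset.card_univ,
    Fintype.card_fin] at square_root_trick
  rw [prob_boxArm_eq p c m n i i]
  have := lt_of_pow_lt_pow_left₀ 4 hε.le (square_root_trick.trans_lt (by linarith))
  linarith

end SquareLattice

section Duality

open Relation

variable {ω : (ℤ × ℤ) × Bool → Bool} {x y : ℤ × ℤ}

/-- The edge of the square lattice that crosses the dual edge `e`, where the dual vertex `x` stands
for the point `x + (1/2, 1/2)`. -/
def crossingEdge (e : (ℤ × ℤ) × Bool) : (ℤ × ℤ) × Bool := (e.1 + step e.2, !e.2)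

/-- The dual configuration: a dual edge is open if the edge that it crosses is closed. -/
def dual (ω : (ℤ × ℤ) × Bool → Bool) : (ℤ × ℤ) × Bool → Bool := fun e => !ω (crossingEdge e)

lemma crossingEdge_injective : Function.Injective crossingEdge := by
  rintro ⟨x, d⟩ ⟨y, d'⟩ h
  simp only [crossingEdge, Prod.mk.injEq, Bool.not_inj_iff] at h ⊢
  obtain ⟨h, rfl⟩ := h
  exact ⟨add_right_cancel h, rfl⟩

lemma antitone_dual : Antitone dual := fun _ _ h e => compl_le_compl (h (crossingEdge e))

@[fun_prop]
lemma measurable_dual : Measurable dual :=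
  measurable_pi_lambda _ fun _ => (measurable_of_finite not).comp (measurable_pi_apply _)

lemma prob_dual_mem {P : (ℤ × ℤ) × Bool → ℝ} (hP : ∀ e, P e ∈ Icc (0 : ℝ) 1)
    {A : Set ((ℤ × ℤ) × Bool → Bool)} (hA : MeasurableSet A) :
    ℙ[P] {ω | dual ω ∈ A} = ℙ[fun e => 1 - P (crossingEdge e)] A := by
  have measurable_not : Measurable fun (ω : (ℤ × ℤ) × Bool → Bool) e => !ω e := by fun_prop
  calc ℙ[P] {ω | dual ω ∈ A} = ℙ[P ∘ crossingEdge] {ω | (fun e => !ω e) ∈ A} :=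
        prob_preimage_comp crossingEdge_injective P (measurable_not hA)
    _ = ℙ[fun e => 1 - P (crossingEdge e)] A := prob_preimage_not (fun _ => hP _) hA

/-- The net number of upward crossings of the horizontal half-line to the left of `x` by a dual
step from `f` to `g`. -/
def leftCrossings (f g x : ℤ × ℤ) : ℤ :=
  if f.1 < x.1 then (if x.2 ≤ g.2 then 1 else 0) - (if x.2 ≤ f.2 then 1 else 0) else 0

/-- The indicator function of the quadrant to the right of the dual vertex `f` and below it. -/
def quadrant (f x : ℤ × ℤ) : ℤ := if f.1 < x.1 ∧ x.2 ≤ f.2 then 1 else 0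

lemma leftCrossings_sub {f g : ℤ × ℤ} (hxy : OpenLink 𝕃 ω x y) (hfg : OpenLink 𝕃 (dual ω) f g) :
    leftCrossings f g y - leftCrossings f g x =
      if x.1 = y.1 then (quadrant g y - quadrant g x) - (quadrant f y - quadrant f x) else 0 := by
  rw [openLink_squareLattice_iff] at hxy hfg
  obtain ⟨x₁, x₂⟩ := x
  obtain ⟨y₁, y₂⟩ := y
  obtain ⟨f₁, f₂⟩ := f
  obtain ⟨g₁, g₂⟩ := g
  simp only [dual, crossingEdge, step, Prod.mk_add_mk, Bool.not_eq_true', Bool.not_true,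
    Bool.not_false, add_zero] at hfg
  simp only [leftCrossings, quadrant] at *
  rcases hxy with ⟨rfl, rfl, hxy⟩ | ⟨rfl, rfl, hxy⟩ | ⟨rfl, rfl, hxy⟩ | ⟨rfl, rfl, hxy⟩ <;>
  rcases hfg with ⟨rfl, rfl, hfg⟩ | ⟨rfl, rfl, hfg⟩ | ⟨rfl, rfl, hfg⟩ | ⟨rfl, rfl, hfg⟩ <;>
  grind

/-- A discrete winding number: `H` sums the left crossings of the steps of the dual path. -/
lemma exists_leftCrossings {s t : ℤ × ℤ} {a b : ℤ}
    (h : ReflTransGen (within (OpenLink 𝕃 (dual ω)) {f | a ≤ f.1 ∧ f.1 < b}) s t) :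
    ∃ H : ℤ × ℤ → ℤ,
      (∀ x y, OpenLink 𝕃 ω x y → H y - H x =
        if x.1 = y.1 then (quadrant t y - quadrant t x) - (quadrant s y - quadrant s x) else 0) ∧
      (∀ x, x.1 ≤ a → H x = 0) ∧
      ∀ x, b ≤ x.1 → H x = (if x.2 ≤ t.2 then 1 else 0) - if x.2 ≤ s.2 then 1 else 0 := by
  induction h with
  | refl => exact ⟨0, by simp⟩
  | @tail f g _ hfg ih =>
    obtain ⟨hfg, ⟨hf, hf'⟩, -⟩ := hfg
    obtain ⟨H, step_eq, left_eq, right_eq⟩ := ih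
    refine ⟨fun x => H x + leftCrossings f g x, fun x y hxy => ?_, fun x hx => ?_, fun x hx => ?_⟩
    · have := step_eq x y hxy
      have := leftCrossings_sub hxy hfg
      split_ifs at * <;> linarith
    · simp [left_eq x hx, leftCrossings, show ¬ f.1 < x.1 by omega]
    · simp [right_eq x hx, leftCrossings, show f.1 < x.1 by omega]

/-- The winding number `H` around the dual path is constant along an open path in the strip, but it
takes different values on the two sides of the strip. -/
lemma not_reflTransGen_of_dual {s t : ℤ × ℤ} {a b a' b' : ℤ}
    (hdual : ReflTransGen (within (OpenLink 𝕃 (dual ω)) {f | a ≤ f.1 ∧ f.1 < b}) s t)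
    (hs : b' ≤ s.2) (ht : t.2 < a') (hx : x.1 ≤ a) (hy : b ≤ y.1) (hy' : a' ≤ y.2 ∧ y.2 ≤ b') :
    ¬ ReflTransGen (within (OpenLink 𝕃 ω) {z | a' ≤ z.2 ∧ z.2 ≤ b'}) x y := fun h => by
  obtain ⟨H, step_eq, left_eq, right_eq⟩ := exists_leftCrossings hdual
  have H_eq : H y = H x := by
    clear hy hy'
    induction h with
    | refl => rfl
    | @tail z w _ hzw ih =>
      obtain ⟨hzw, ⟨hz, hz'⟩, hw, hw'⟩ := hzw
      have := step_eq z w hzw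
      simp only [quadrant] at this
      grind
  rw [left_eq x hx, right_eq y hy, if_neg (by omega), if_pos (by omega)] at H_eq
  norm_num at H_eq

end Duality

section Block

open Relation

variable {V E : Type*} {G : Graph V E} {R S : Set V}

instance (ω : E → Bool) (R : Set V) : Std.Symm (within (OpenLink G ω) R) :=
  ⟨fun _ _ h => ⟨h.1.symm, h.2.2, h.2.1⟩⟩

lemma exists_startingIn_of_eqOn_compl_innerEdges {ω ω' : E → Bool} {x y : V}
    (hω : EqOn ω' ω (innerEdges G S)ᶜ) (h : ReflTransGen (startingIn (OpenLink G ω') R) x y)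
    (hx : x ∈ S) (hy : y ∉ S) : ∃ z ∈ S, ReflTransGen (startingIn (OpenLink G ω) R) z y := by
  have openLink : ∀ z w, w ∉ S → OpenLink G ω' z w → OpenLink G ω z w := fun z w hw =>
    OpenLink.congr fun e he => hω fun he' => hw (mem_of_mem_innerEdges he' he.symm)
  obtain ⟨z, hz, w, hw, hzw, hwy⟩ := exists_last_exit h hx hy
  refine ⟨z, hz, ReflTransGen.head ⟨hzw.1, openLink z w hw hzw.2⟩ ?_⟩
  exact ReflTransGen.mono (fun _ _ h => ⟨h.1.1, openLink _ _ h.2.2 h.1.2⟩) _ _ hwy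

lemma reflTransGen_within_box {c x y : ℤ × ℤ} {n : ℤ} {ω : (ℤ × ℤ) × Bool → Bool}
    (hω : ∀ e ∈ innerEdges 𝕃 (box c n), ω e = true) (hx : x ∈ box c n) (hy : y ∈ box c n) :
    ReflTransGen (within (OpenLink 𝕃 ω) (box c n)) x y := by
  have to_center : ∀ k : ℕ, ∀ x ∈ box c n, (x.1 - c.1).natAbs + (x.2 - c.2).natAbs = k →
      ReflTransGen (within (OpenLink 𝕃 ω) (box c n)) x c := fun k => by
    induction k with
    | zero =>
      intro x _ hk
      rw [show x = c by ext <;> omega]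
    | succ k ih =>
      intro x hx hk
      obtain ⟨y, hy, hyk, e, -, he⟩ : ∃ y ∈ box c n,
          (y.1 - c.1).natAbs + (y.2 - c.2).natAbs = k ∧ OpenLink 𝕃 (fun _ => true) x y := by
        simp only [openLink_squareLattice_iff, mem_box, Prod.exists] at hx ⊢
        rcases lt_trichotomy x.1 c.1 with h | h | h
        · exact ⟨x.1 + 1, x.2, by omega, by omega, by simp⟩
        · rcases lt_or_ge x.2 c.2 with h' | h'
          · exact ⟨x.1, x.2 + 1, by omega, by omega, by simp⟩
          · exact ⟨x.1, x.2 - 1, by omega, by omega, by simp⟩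
        · exact ⟨x.1 - 1, x.2, by omega, by omega, by simp⟩
      exact (ih y hy hyk).head ⟨⟨e, hω e ⟨x, hx, y, hy, he⟩, he⟩, hx, hy⟩
  exact (to_center _ x hx rfl).trans (symm (to_center _ y hy rfl))

lemma crossingEdge_mem_innerEdges_box {c : ℤ × ℤ} {n : ℤ} {e : (ℤ × ℤ) × Bool}
    (he : e ∈ innerEdges 𝕃 (box c n)) : crossingEdge e ∈ innerEdges 𝕃 (box c (n + 1)) := by
  obtain ⟨x, d⟩ := e
  have he₀ := mem_of_mem_innerEdges he (Or.inl ⟨rfl, rfl⟩)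
  have he₁ := mem_of_mem_innerEdges he (Or.inr ⟨rfl, rfl⟩)
  refine ⟨x + step d, ?_, x + step d + step !d, ?_, .inl ⟨rfl, rfl⟩⟩ <;> cases d <;>
    simp only [mem_box, step, Bool.not_false, Bool.not_true, Prod.fst_add, Prod.snd_add] at * <;>
    omega

variable {ω : (ℤ × ℤ) × Bool → Bool} {x c : ℤ × ℤ} {m n N : ℤ}

lemma not_reflTransGen_within_box_of_dual {xl xr xt xb yl yr yt yb : ℤ × ℤ}
    (hl : ReflTransGen (startingIn (OpenLink 𝕃 ω) (box c n)) xl yl) (hyl : yl ∈ face c n 2)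
    (hr : ReflTransGen (startingIn (OpenLink 𝕃 ω) (box c n)) xr yr) (hyr : yr ∈ face c n 0)
    (ht : ReflTransGen (startingIn (OpenLink 𝕃 (dual ω)) (box c n)) xt yt) (hyt : yt ∈ face c n 1)
    (hb : ReflTransGen (startingIn (OpenLink 𝕃 (dual ω)) (box c n)) xb yb) (hyb : yb ∈ face c n 3)
    (htb : ReflTransGen (within (OpenLink 𝕃 (dual ω)) (box c n)) xt xb) :
    ¬ ReflTransGen (within (OpenLink 𝕃 ω) (box c n)) xl xr := fun h => by
  simp only [face, mem_ofPred_eq] at hyl hyr hyt hyb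
  have box_subset_horizontal : box c n ⊆ {z | c.2 - n ≤ z.2 ∧ z.2 ≤ c.2 + n} :=
    fun z hz => (mem_box.1 hz).2
  have box_subset_vertical : box c n ⊆ {f | c.1 - n - 1 ≤ f.1 ∧ f.1 < c.1 + n + 1} := fun f hf => by
    have := mem_box.1 hf
    exact ⟨by omega, by omega⟩
  have hl := reflTransGen_within_of_startingIn box_subset_horizontal hyl.2 hl
  have hr := reflTransGen_within_of_startingIn box_subset_horizontal hyr.2 hr
  have ht := reflTransGen_within_of_startingIn box_subset_vertical ⟨by omega, by omega⟩ ht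
  have hb := reflTransGen_within_of_startingIn box_subset_vertical ⟨by omega, by omega⟩ hb
  have h := reflTransGen_within_mono (fun _ _ _ _ => id) box_subset_horizontal h
  have htb := reflTransGen_within_mono (fun _ _ _ _ => id) box_subset_vertical htb
  exact not_reflTransGen_of_dual ((symm ht).trans (htb.trans hb)) (by omega) (by omega) (by omega)
    (by omega) hyr.2 ((symm hl).trans (h.trans hr))

/-- The vertices of the box of radius `N` around the origin that are not in the box of radius
`N - 1`. -/
def shell (N : ℤ) : Set (ℤ × ℤ) := box 0 N \ box 0 (N - 1)

lemma exists_mem_shell (hx : x ∈ box 0 N) (h : Exits (OpenLink 𝕃 ω) (box 0 N) x) :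
    ∃ y ∈ shell N, ReflTransGen (within (OpenLink 𝕃 ω) (box 0 N)) x y := by
  refine (h.anti (box_mono 0 (by omega))).exists_within (fun y hy z hyz => ?_) hx
  rw [openLink_squareLattice_iff] at hyz
  simp only [mem_box] at *
  omega

lemma notMem_box_of_mem_face {i : Fin 4} (h : x ∈ face c n i) : x ∉ box c n := by
  fin_cases i <;> simp only [face, mem_ofPred_eq, mem_box] at * <;> omega

/-- The edges of the block of radius `m + 1` around `c`. Its radius exceeds that of the arms by one
so that it also contains the edges that cross the dual box of radius `m`. -/
def block (c : ℤ × ℤ) (m : ℤ) : Set ((ℤ × ℤ) × Bool) := innerEdges 𝕃 (box c (m + 1))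

lemma finite_block (c : ℤ × ℤ) (m : ℤ) : (block c m).Finite :=
  finite_innerEdges finite_incidenceSet_squareLattice (finite_box c (m + 1))

lemma exists_mem_shell_connected_by_block {ω₀ ω₁ : (ℤ × ℤ) × Bool → Bool}
    (hω : EqOn ω₁ ω₀ (block c m)ᶜ)
    (h₀ : ∀ e ∈ block c m, ω₀ e = false)
    (h₁ : ∀ e ∈ block c m, ω₁ e = true)
    (hcN : box c (m + 1) ⊆ box 0 N) (hNn : box 0 N ⊆ box c n)
    (right : ω₁ ∈ boxArm c m n 0) (left : ω₁ ∈ boxArm c m n 2)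
    (top : dual ω₀ ∈ boxArm c m n 1) (bottom : dual ω₀ ∈ boxArm c m n 3) :
    ∃ x ∈ shell N, ∃ y ∈ shell N, ¬ ReflTransGen (within (OpenLink 𝕃 ω₀) (box 0 N)) x y ∧
      ReflTransGen (within (OpenLink 𝕃 ω₁) (box 0 N)) x y := by
  have hω₀₁ : ω₀ ≤ ω₁ := fun e => by
    by_cases he : e ∈ block c m
    · simp [h₀ e he]
    · exact (hω he).ge
  have box_subset : box c m ⊆ box c (m + 1) := box_mono c (by omega)
  have arm_to_shell : ∀ i, ω₁ ∈ boxArm c m n i → ∃ z ∈ box c (m + 1), ∃ w ∈ face c n i,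
      ReflTransGen (startingIn (OpenLink 𝕃 ω₀) (box c n)) z w ∧
      ∃ x ∈ shell N, ReflTransGen (within (OpenLink 𝕃 ω₀) (box 0 N)) z x := by
    rintro i ⟨x, hx, w, hw, hxw⟩
    have hwN : w ∉ box 0 N := fun h => notMem_box_of_mem_face hw (hNn h)
    obtain ⟨z, hz, hzw⟩ := exists_startingIn_of_eqOn_compl_innerEdges hω hxw (box_subset hx)
      fun h => hwN (hcN h)
    exact ⟨z, hz, w, hw, hzw,
      exists_mem_shell (hcN hz) (exits_of_reflTransGen_startingIn hzw hwN)⟩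
  obtain ⟨zl, hzl, wl, hwl, hzwl, xl, hxl, hzxl⟩ := arm_to_shell 2 left
  obtain ⟨zr, hzr, wr, hwr, hzwr, xr, hxr, hzxr⟩ := arm_to_shell 0 right
  obtain ⟨xt, hxt, wt, hwt, ht⟩ := top
  obtain ⟨xb, hxb, wb, hwb, hb⟩ := bottom
  refine ⟨xl, hxl, xr, hxr, fun h => ?_, ?_⟩
  · have hxtb : ReflTransGen (within (OpenLink 𝕃 (dual ω₀)) (box c m)) xt xb :=
      reflTransGen_within_box (fun e he => by
        simp [dual, h₀ _ (crossingEdge_mem_innerEdges_box he)]) hxt hxb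
    have box_subset_n : box c m ⊆ box c n := box_subset.trans (hcN.trans hNn)
    exact not_reflTransGen_within_box_of_dual hzwl hwl hzwr hwr ht hwt hb hwb
      (reflTransGen_within_mono (fun _ _ _ _ => id) box_subset_n hxtb)
      (reflTransGen_within_mono (fun _ _ _ _ => id) hNn (hzxl.trans (h.trans (symm hzxr))))
  · have mono := fun {x y} => isUpperSet_reflTransGen_within (G := 𝕃) (box 0 N) x y hω₀₁
    have hzlr := reflTransGen_within_mono (fun _ _ _ _ => id) hcN
      (reflTransGen_within_box h₁ hzl hzr)
    exact (symm (mono hzxl)).trans (hzlr.trans (mono hzxr))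

end Block

section NumClusters

open Relation

lemma surjective_setoidMapOfLe {α : Type*} {r s : Setoid α} (h : r ≤ s) :
    (Setoid.map_of_le h).Surjective :=
  Quotient.ind fun x => ⟨Quotient.mk r x, rfl⟩

lemma card_quotient_le_of_le {α : Type*} [Finite α] {r s : Setoid α} (h : r ≤ s) :
    Nat.card (Quotient s) ≤ Nat.card (Quotient r) :=
  Nat.card_le_card_of_surjective _ (surjective_setoidMapOfLe h)

lemma card_quotient_lt_of_lt {α : Type*} [Finite α] {r s : Setoid α} (h : r < s) :
    Nat.card (Quotient s) < Nat.card (Quotient r) := by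
  refine (card_quotient_le_of_le h.le).lt_of_ne fun heq => h.not_ge fun {x y} hxy => ?_
  have bijective := (Nat.bijective_iff_surjective_and_card _).2
    ⟨surjective_setoidMapOfLe h.le, heq.symm⟩
  exact Quotient.exact (bijective.1 (Quotient.sound hxy :))

variable {V E : Type*} {G : Graph V E} {R W : Set V} {ω ω' : E → Bool}

/-- The equivalence relation on `W` of being connected by an open path in `R`. -/
def clusterSetoid (G : Graph V E) (R W : Set V) (ω : E → Bool) : Setoid W where
  r x y := ReflTransGen (within (OpenLink G ω) R) x y
  iseqv := ⟨fun _ => .refl, fun h => symm h, fun h h' => h.trans h'⟩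

/-- The number of open clusters in `R` that intersect `W`. -/
noncomputable def numClusters (G : Graph V E) (R W : Set V) (ω : E → Bool) : ℕ :=
  Nat.card (Quotient (clusterSetoid G R W ω))

lemma clusterSetoid_mono (hω : ω ≤ ω') : clusterSetoid G R W ω ≤ clusterSetoid G R W ω' :=
  fun {x y} => isUpperSet_reflTransGen_within R (x : V) y hω

lemma numClusters_anti (hW : W.Finite) (hω : ω ≤ ω') :
    numClusters G R W ω' ≤ numClusters G R W ω :=
  have := hW.to_subtype
  card_quotient_le_of_le (clusterSetoid_mono hω)

lemma numClusters_lt (hW : W.Finite) (hω : ω ≤ ω') {x y : V} (hx : x ∈ W) (hy : y ∈ W)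
    (hxy : ¬ ReflTransGen (within (OpenLink G ω) R) x y)
    (hxy' : ReflTransGen (within (OpenLink G ω') R) x y) :
    numClusters G R W ω' < numClusters G R W ω :=
  have := hW.to_subtype
  card_quotient_lt_of_lt ((clusterSetoid_mono hω).lt_of_not_ge fun h =>
    hxy (@h ⟨x, hx⟩ ⟨y, hy⟩ hxy'))

lemma numClusters_le_ncard (hW : W.Finite) : numClusters G R W ω ≤ W.ncard :=
  have := hW.to_subtype
  Nat.card_le_card_of_surjective _ Quotient.mk_surjective

lemma dependsOn_numClusters : DependsOn (numClusters G R W) (innerEdges G R) := by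
  intro ω ω' h
  have : clusterSetoid G R W ω = clusterSetoid G R W ω' :=
    Setoid.ext fun x y => (dependsOn_reflTransGen_within R x y h).to_iff
  rw [numClusters, this, numClusters]

lemma measurable_numClusters (hG : ∀ x, (G.incidenceSet x).Finite) (hR : R.Finite) :
    Measurable (numClusters G R W) :=
  measurable_to_countable' fun k => (IsLocal.of_dependsOn
    (fun _ _ h => congrArg (· = k) (dependsOn_numClusters h))
    (finite_innerEdges hG hR)).measurableSet

end NumClusters

section SetOn

variable {E β : Type*} {Q : Set E} {b : β} {ω ω' : E → β}

open Classical in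
/-- The function that agrees with `ω` except that it takes the value `b` on `Q`; used to modify
configurations, and to modify the parameters of the edges. -/
noncomputable def setOn (Q : Set E) (b : β) (ω : E → β) : E → β :=
  Q.piecewise (fun _ => b) ω

lemma setOn_apply_of_mem {e : E} (he : e ∈ Q) : setOn Q b ω e = b := by simp [setOn, he]

lemma setOn_apply_of_notMem {e : E} (he : e ∉ Q) : setOn Q b ω e = ω e := by simp [setOn, he]

lemma setOn_congr (h : EqOn ω ω' Qᶜ) : setOn Q b ω = setOn Q b ω' := by
  ext e
  by_cases he : e ∈ Q
  · simp [setOn_apply_of_mem he]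
  · simp [setOn_apply_of_notMem he, h he]

lemma setOn_eq_of_eqOn (hQ : ∀ e ∈ Q, ω' e = b) (hQ' : EqOn ω' ω Qᶜ) : setOn Q b ω = ω' := by
  ext e
  by_cases he : e ∈ Q
  · rw [setOn_apply_of_mem he, hQ e he]
  · rw [setOn_apply_of_notMem he, hQ' he]

lemma setOn_empty : setOn ∅ b ω = ω := setOn_eq_of_eqOn (fun _ he => he.elim) (eqOn_refl _ _)

lemma setOn_union (Q Q' : Set E) (b : β) (ω : E → β) :
    setOn (Q ∪ Q') b ω = setOn Q b (setOn Q' b ω) := by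
  ext e
  by_cases he : e ∈ Q <;> by_cases he' : e ∈ Q' <;> simp [setOn, he, he']

lemma le_setOn_true (ω : E → Bool) : ω ≤ setOn Q true ω := fun e => by
  by_cases he : e ∈ Q
  · simp [setOn_apply_of_mem he, Bool.le_true]
  · rw [setOn_apply_of_notMem he]

lemma setOn_false_le (ω : E → Bool) : setOn Q false ω ≤ ω := fun e => by
  by_cases he : e ∈ Q
  · simp [setOn_apply_of_mem he]
  · rw [setOn_apply_of_notMem he]

@[fun_prop]
lemma measurable_setOn [MeasurableSpace β] : Measurable (setOn Q b) :=
  measurable_pi_lambda _ fun e => by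
    by_cases he : e ∈ Q
    · simp [setOn_apply_of_mem he]
    · simpa [setOn_apply_of_notMem he] using measurable_pi_apply e

end SetOn

section FourArms

variable {c : ℤ × ℤ} {m n : ℤ} {p : ℝ} {P : (ℤ × ℤ) × Bool → ℝ}

/-- The event that opening all edges of the block around `c` creates the arms of the box of radius
`m` to the right and to the left, and closing them creates dual arms to the top and to the
bottom. -/
def fourArms (c : ℤ × ℤ) (m n : ℤ) : Set ((ℤ × ℤ) × Bool → Bool) :=
  setOn (block c m) true ⁻¹' (boxArm c m n 0 ∩ boxArm c m n 2) ∩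
    (dual ∘ setOn (block c m) false) ⁻¹' (boxArm c m n 1 ∩ boxArm c m n 3)

lemma dependsOn_fourArms : DependsOn (· ∈ fourArms c m n) (block c m)ᶜ := fun ω ω' h => by
  simp only [fourArms, mem_inter_iff, mem_preimage, Function.comp_apply,
    setOn_congr (fun e he => h e he : EqOn ω ω' (block c m)ᶜ)]

lemma measurableSet_boxArm_inter (c : ℤ × ℤ) (m n : ℤ) (i j : Fin 4) :
    MeasurableSet (boxArm c m n i ∩ boxArm c m n j) :=
  ((isLocal_boxArm c m n i).inter (isLocal_boxArm c m n j)).measurableSet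

lemma measurableSet_fourArms : MeasurableSet (fourArms c m n) :=
  (measurable_setOn (measurableSet_boxArm_inter c m n 0 2)).inter
    ((measurable_dual.comp measurable_setOn) (measurableSet_boxArm_inter c m n 1 3))

lemma add_sub_one_le_measureReal_inter {Ω : Type*} [MeasurableSpace Ω] {μ : Measure Ω}
    [IsProbabilityMeasure μ] {A B : Set Ω} (hB : MeasurableSet B) :
    μ.real A + μ.real B - 1 ≤ μ.real (A ∩ B) := by
  linarith [measureReal_union_add_inter (μ := μ) (s := A) hB,
    measureReal_le_one (μ := μ) (s := A ∪ B)]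

lemma three_quarters_le_prob_boxArm_inter (hP : ∀ e, p ≤ P e)
    (harm : ∀ i, 7 / 8 ≤ ℙ⟦p⟧ (boxArm c m n i)) (i j : Fin 4) :
    3 / 4 ≤ ℙ[P] (boxArm c m n i ∩ boxArm c m n j) := by
  have arm_le : ∀ i, 7 / 8 ≤ ℙ[P] (boxArm c m n i) := fun i => (harm i).trans
    (prob_mono_param hP (isUpperSet_boxArm c m n i) (isLocal_boxArm c m n i).measurableSet)
  linarith [arm_le i, arm_le j, add_sub_one_le_measureReal_inter (μ := percMeasure P)
    (A := boxArm c m n i) (isLocal_boxArm c m n j).measurableSet]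

lemma half_le_prob_fourArms (hp : 0 ≤ p) (hP : ∀ e, P e ∈ Icc p (1 / 2))
    (harm : ∀ i, 7 / 8 ≤ ℙ⟦p⟧ (boxArm c m n i)) : 1 / 2 ≤ ℙ[P] (fourArms c m n) := by
  have primal : 3 / 4 ≤ ℙ[P] (setOn (block c m) true ⁻¹' (boxArm c m n 0 ∩ boxArm c m n 2)) :=
    (three_quarters_le_prob_boxArm_inter (fun e => (hP e).1) harm 0 2).trans <|
      measureReal_mono (fun ω => ((isUpperSet_boxArm c m n 0).inter (isUpperSet_boxArm c m n 2))
        (le_setOn_true ω)) (measure_ne_top _ _)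
  have dual_ge : 3 / 4 ≤ ℙ[P] {ω | dual ω ∈ boxArm c m n 1 ∩ boxArm c m n 3} := by
    rw [prob_dual_mem (fun e => ⟨hp.trans (hP e).1, by linarith [(hP e).2]⟩)
      (measurableSet_boxArm_inter c m n 1 3)]
    exact three_quarters_le_prob_boxArm_inter
      (fun e => by linarith [(hP (crossingEdge e)).1, (hP (crossingEdge e)).2]) harm 1 3
  have dual_arms := dual_ge.trans <| measureReal_mono (μ := percMeasure P)
    (s₂ := (dual ∘ setOn (block c m) false) ⁻¹' (boxArm c m n 1 ∩ boxArm c m n 3))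
    (fun ω => ((isUpperSet_boxArm c m n 1).inter (isUpperSet_boxArm c m n 3))
      (antitone_dual (setOn_false_le ω))) (measure_ne_top _ _)
  refine le_trans ?_ (add_sub_one_le_measureReal_inter
    ((measurable_dual.comp measurable_setOn) (measurableSet_boxArm_inter c m n 1 3)))
  linarith

end FourArms

section MeanClusters

variable {c : ℤ × ℤ} {m n N : ℤ} {p : ℝ} {P P' : (ℤ × ℤ) × Bool → ℝ}

/-- The expected number of clusters in the box of radius `N` that reach its shell. -/
noncomputable def meanClusters (N : ℤ) (P : (ℤ × ℤ) × Bool → ℝ) : ℝ :=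
  ∫ u, (numClusters 𝕃 (box 0 N) (shell N) (threshold P u) : ℝ) ∂uniformField _

lemma finite_shell (N : ℤ) : (shell N).Finite := (finite_box 0 N).sdiff

lemma integrable_numClusters_threshold (N : ℤ) (P : (ℤ × ℤ) × Bool → ℝ) :
    Integrable (fun u => (numClusters 𝕃 (box 0 N) (shell N) (threshold P u) : ℝ))
      (uniformField _) := by
  refine .of_bound (C := (shell N).ncard) (Measurable.aestronglyMeasurable ?_) (.of_forall ?_)
  · exact measurable_from_top.comp ((measurable_numClusters finite_incidenceSet_squareLattice
      (finite_box 0 N)).comp (measurable_threshold P))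
  · intro u
    simpa using numClusters_le_ncard (finite_shell N)

lemma numClusters_threshold_lt (hPP' : EqOn P' P (block c m)ᶜ) (hP : ∀ e ∈ block c m, P e = p)
    (hP' : ∀ e ∈ block c m, P' e = 1 / 2) (hcN : box c (m + 1) ⊆ box 0 N)
    (hNn : box 0 N ⊆ box c n) {u : (ℤ × ℤ) × Bool → ℝ} (hu : threshold P u ∈ fourArms c m n)
    (hu' : ∀ e ∈ block c m, u e ∈ Ico p (1 / 2)) :
    numClusters 𝕃 (box 0 N) (shell N) (threshold P' u) <
      numClusters 𝕃 (box 0 N) (shell N) (threshold P u) := by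
  have closed : setOn (block c m) false (threshold P u) = threshold P u :=
    setOn_eq_of_eqOn (fun e he => by simp [threshold, hP e he, (hu' e he).1]) (eqOn_refl _ _)
  have opened : setOn (block c m) true (threshold P u) = threshold P' u :=
    setOn_eq_of_eqOn (fun e he => by simpa [threshold, hP' e he] using (hu' e he).2)
      fun e he => by simp [threshold, hPP' he]
  obtain ⟨⟨right, left⟩, top, bottom⟩ := hu
  rw [opened] at right left
  rw [Function.comp_apply, closed] at top bottom
  have hle : threshold P u ≤ threshold P' u := opened ▸ le_setOn_true _
  obtain ⟨x, hx, y, hy, hxy, hxy'⟩ := exists_mem_shell_connected_by_block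
    (fun e he => by rw [← opened, setOn_apply_of_notMem he])
    (fun e he => by rw [← closed, setOn_apply_of_mem he])
    (fun e he => by rw [← opened, setOn_apply_of_mem he]) hcN hNn right left top bottom
  exact numClusters_lt (finite_shell N) hle hx hy hxy hxy'

lemma uniformField_real_pi_Ico {ι : Type*} {Q : Set ι} (hQ : Q.Finite) {a b : ℝ} (ha : 0 ≤ a)
    (hab : a ≤ b) (hb : b ≤ 1) :
    (uniformField ι).real (Q.pi fun _ => Ico a b) = (b - a) ^ Q.ncard := by
  have := Measure.infinitePi_pi (μ := fun _ : ι => unitUniform) (s := hQ.toFinset)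
    (t := fun _ => Ico a b) fun _ _ => measurableSet_Ico
  rw [hQ.coe_toFinset, Finset.prod_const] at this
  rw [measureReal_def, uniformField, this, ENNReal.toReal_pow, ncard_eq_toFinset_card Q hQ]
  exact congrArg (· ^ _) (unitUniform_real_Ico ha hab hb)

lemma measurableSet_pi_block {s : Set ℝ} (hs : MeasurableSet s) :
    MeasurableSet ((block c m).pi fun _ => s) :=
  .pi (finite_block c m).countable fun _ _ => hs

lemma le_uniformField_fourArms_inter (hp : p ∈ Icc 0 (1 / 2))
    (harms : 1 / 2 ≤ ℙ[P] (fourArms c m n)) :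
    1 / 2 * (1 / 2 - p) ^ (block c m).ncard ≤ (uniformField _).real
      (threshold P ⁻¹' fourArms c m n ∩ (block c m).pi fun _ => Ico p (1 / 2)) := by
  have independent := infinitePi_real_inter_of_dependsOn (fun _ => unitUniform)
    (measurable_threshold P (measurableSet_fourArms (c := c) (m := m) (n := n)))
    (measurableSet_pi_block (c := c) (m := m) (s := Ico p (1 / 2)) measurableSet_Ico)
    (fun u u' h => dependsOn_fourArms fun e he => by simp only [threshold, h e he])
    (dependsOn_mem_of_imp fun u u' h hu e he => h e he ▸ hu e he) disjoint_compl_left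
  rw [uniformField, independent, ← uniformField,
    uniformField_real_pi_Ico (finite_block c m) hp.1 hp.2 (by norm_num)]
  have := pow_nonneg (sub_nonneg.2 hp.2) (block c m).ncard
  rw [prob_eq_uniformField measurableSet_fourArms] at harms
  exact mul_le_mul_of_nonneg_right harms this

lemma meanClusters_add_le (hp : p ∈ Icc 0 (1 / 2)) (hPP' : EqOn P' P (block c m)ᶜ)
    (hP : ∀ e ∈ block c m, P e = p) (hP' : ∀ e ∈ block c m, P' e = 1 / 2)
    (hcN : box c (m + 1) ⊆ box 0 N) (hNn : box 0 N ⊆ box c n)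
    (harms : 1 / 2 ≤ ℙ[P] (fourArms c m n)) :
    meanClusters N P' + 1 / 2 * (1 / 2 - p) ^ (block c m).ncard ≤ meanClusters N P := by
  set A : Set ((ℤ × ℤ) × Bool → ℝ) :=
    threshold P ⁻¹' fourArms c m n ∩ (block c m).pi fun _ => Ico p (1 / 2)
  have measurable_A : MeasurableSet A := (measurable_threshold P measurableSet_fourArms).inter
    (measurableSet_pi_block measurableSet_Ico)
  have hPP'_le : P ≤ P' := fun e => by
    by_cases he : e ∈ block c m
    · rw [hP e he, hP' e he]; exact hp.2
    · rw [hPP' he]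
  have pointwise : ∀ u, (numClusters 𝕃 (box 0 N) (shell N) (threshold P' u) : ℝ) +
      A.indicator 1 u ≤ numClusters 𝕃 (box 0 N) (shell N) (threshold P u) := fun u => by
    by_cases hu : u ∈ A
    · rw [indicator_of_mem hu, Pi.one_apply]
      exact_mod_cast numClusters_threshold_lt hPP' hP hP' hcN hNn hu.1 hu.2
    · rw [indicator_of_notMem hu, add_zero]
      exact_mod_cast numClusters_anti (finite_shell N) (threshold_mono u hPP'_le)
  have integrable_A : Integrable (A.indicator (1 : ((ℤ × ℤ) × Bool → ℝ) → ℝ)) (uniformField _) :=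
    (integrable_const (1 : ℝ)).indicator measurable_A
  calc meanClusters N P' + 1 / 2 * (1 / 2 - p) ^ (block c m).ncard
      ≤ meanClusters N P' + (uniformField _).real A := by
        gcongr; exact le_uniformField_fourArms_inter hp harms
    _ = ∫ u, ((numClusters 𝕃 (box 0 N) (shell N) (threshold P' u) : ℝ) + A.indicator 1 u)
          ∂uniformField _ := by
        rw [integral_add (integrable_numClusters_threshold N P') integrable_A,
          integral_indicator_one measurable_A, meanClusters]
    _ ≤ meanClusters N P := integral_mono
        ((integrable_numClusters_threshold N P').add integrable_A)
        (integrable_numClusters_threshold N P) pointwise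

end MeanClusters

section Counting

variable {c : ℤ × ℤ} {n N : ℤ} {m : ℕ} {p : ℝ}

lemma block_subset (c : ℤ × ℤ) (m : ℤ) : block c m ⊆ box c (m + 1) ×ˢ univ :=
  fun e he => ⟨mem_of_mem_innerEdges he (isLink_squareLattice e), mem_univ _⟩

lemma disjoint_block {c c' : ℤ × ℤ} {m : ℤ} (h : Disjoint (box c (m + 1)) (box c' (m + 1))) :
    Disjoint (block c m) (block c' m) :=
  (disjoint_prod.2 (.inl h)).mono (block_subset c m) (block_subset c' m)

lemma ncard_box (c : ℤ × ℤ) (n : ℕ) : (box c n).ncard = (2 * n + 1) ^ 2 := by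
  rw [box, ← Finset.coe_Icc, ncard_coe_finset, ← Finset.Icc_product_Icc, Finset.card_product,
    Int.card_Icc, Int.card_Icc, sq]
  congr 1 <;> omega

lemma ncard_block_le (c : ℤ × ℤ) (m : ℕ) : (block c m).ncard ≤ (2 * m + 3) ^ 2 * 2 := by
  calc (block c m).ncard ≤ (box c (m + 1) ×ˢ (univ : Set Bool)).ncard :=
        ncard_le_ncard (block_subset c m) ((finite_box c _).prod finite_univ)
    _ = (2 * m + 3) ^ 2 * 2 := by
        rw [ncard_prod, ncard_univ, Nat.card_eq_fintype_card, Fintype.card_bool]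
        exact congrArg (· * 2) (ncard_box c (m + 1))

lemma ncard_shell_succ (N : ℕ) : (shell (N + 1)).ncard = 8 * (N + 1) := by
  have h := ncard_sdiff (box_mono 0 (by omega : (N : ℤ) ≤ N + 1)) (finite_box 0 N)
  rw [ncard_box, show (N : ℤ) + 1 = (N + 1 : ℕ) by push_cast; rfl, ncard_box] at h
  rw [shell, add_sub_cancel_right, show (N : ℤ) + 1 = (N + 1 : ℕ) by push_cast; rfl, h]
  have : (2 * (N + 1) + 1) ^ 2 = 8 * (N + 1) + (2 * N + 1) ^ 2 := by ring
  omega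

lemma meanClusters_nonneg (N : ℤ) (P : (ℤ × ℤ) × Bool → ℝ) : 0 ≤ meanClusters N P :=
  integral_nonneg fun _ => Nat.cast_nonneg _

lemma meanClusters_le_ncard_shell (N : ℤ) (P : (ℤ × ℤ) × Bool → ℝ) :
    meanClusters N P ≤ (shell N).ncard :=
  (integral_mono (integrable_numClusters_threshold N P) (integrable_const _) fun _ =>
    Nat.cast_le.2 (numClusters_le_ncard (finite_shell N))).trans_eq (by simp)

lemma meanClusters_add_card_mul_le {ι : Type*} (hp : p ∈ Icc 0 (1 / 2))
    (harm : ∀ c i, 7 / 8 ≤ ℙ⟦p⟧ (boxArm c m n i)) {c : ι → ℤ × ℤ} (J : Finset ι)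
    (hJ : (J : Set ι).PairwiseDisjoint fun j => block (c j) m)
    (hcN : ∀ j ∈ J, box (c j) (m + 1) ⊆ box 0 N) (hNn : ∀ j ∈ J, box 0 N ⊆ box (c j) n) :
    meanClusters N (setOn (⋃ j ∈ J, block (c j) m) (1 / 2) fun _ => p) +
      J.card * (1 / 2 * (1 / 2 - p) ^ ((2 * m + 3) ^ 2 * 2)) ≤ meanClusters N fun _ => p := by
  induction J using Finset.cons_induction with
  | empty => simp [setOn_empty]
  | cons j J hj ih =>
    simp only [Finset.coe_cons, Finset.forall_mem_cons] at hJ hcN hNn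
    obtain ⟨hJ, hjJ⟩ := (pairwiseDisjoint_insert_of_notMem hj).1 hJ
    have notMem : ∀ e ∈ block (c j) m, e ∉ ⋃ i ∈ J, block (c i) m := fun e he he' => by
      obtain ⟨i, hi, he'⟩ := mem_iUnion₂.1 he'
      exact disjoint_left.1 (hjJ i hi) he he'
    have hP : ∀ e, setOn (⋃ i ∈ J, block (c i) m) (1 / 2) (fun _ => p) e ∈ Icc p (1 / 2) :=
      fun e => by
        by_cases he : e ∈ ⋃ i ∈ J, block (c i) m
        · simpa only [setOn_apply_of_mem he] using right_mem_Icc.2 hp.2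
        · simpa only [setOn_apply_of_notMem he] using left_mem_Icc.2 hp.2
    have block_le := meanClusters_add_le hp (fun _ he => setOn_apply_of_notMem he)
      (fun e he => setOn_apply_of_notMem (notMem e he)) (fun _ he => setOn_apply_of_mem he)
      hcN.1 hNn.1 (half_le_prob_fourArms hp.1 hP (harm _))
    have pow_le := pow_le_pow_of_le_one (sub_nonneg.2 hp.2) (by linarith [hp.1])
      (ncard_block_le (c j) m)
    simp only [Finset.mem_cons, iUnion_iUnion_eq_or_left, Finset.card_cons, setOn_union,
      Nat.cast_add_one]
    linarith [ih hJ hcN.2 hNn.2]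

/-- The centres of a family of disjoint boxes of radius `m + 1`. -/
def gridPoint (m : ℕ) (j : ℕ × ℕ) : ℤ × ℤ := ((2 * m + 3) * j.1, (2 * m + 3) * j.2)

lemma disjoint_box_gridPoint {i j : ℕ × ℕ} (hij : i ≠ j) :
    Disjoint (box (gridPoint m i) (m + 1)) (box (gridPoint m j) (m + 1)) := by
  have eq_of_close : ∀ a b : ℕ, (2 * m + 3 : ℤ) * a - (m + 1) ≤ (2 * m + 3) * b + (m + 1) →
      a ≤ b := fun a b h => by
    by_contra! hab
    have : (b : ℤ) + 1 ≤ a := by exact_mod_cast hab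
    nlinarith
  refine disjoint_left.2 fun x hi hj => hij ?_
  simp only [mem_box, gridPoint] at hi hj
  ext <;> exact le_antisymm (eq_of_close _ _ (by linarith)) (eq_of_close _ _ (by linarith))

lemma sq_mul_le_of_prob_boxArm (hp : p ∈ Icc 0 (1 / 2))
    (harm : ∀ n : ℤ, m ≤ n → ∀ c i, 7 / 8 ≤ ℙ⟦p⟧ (boxArm c m n i)) (T : ℕ) :
    (T : ℝ) ^ 2 * (1 / 2 * (1 / 2 - p) ^ ((2 * m + 3) ^ 2 * 2)) ≤
      8 * ((2 * m + 3) * T + m + 1) := by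
  set N : ℕ := (2 * m + 3) * T + m
  set J : Finset (ℕ × ℕ) := Finset.range T ×ˢ Finset.range T
  have gridPoint_le : ∀ j ∈ J, (gridPoint m j).1 ∈ Icc 0 (N - m : ℤ) ∧
      (gridPoint m j).2 ∈ Icc 0 (N - m : ℤ) := fun j hj => by
    simp only [J, Finset.mem_product, Finset.mem_range] at hj
    have : ∀ a < T, (2 * m + 3 : ℤ) * a ∈ Icc 0 (N - m : ℤ) := fun a ha => by
      refine ⟨by positivity, ?_⟩
      simp only [N, Nat.cast_add, Nat.cast_mul, Nat.cast_ofNat, add_sub_cancel_right]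
      gcongr
    exact ⟨this _ hj.1, this _ hj.2⟩
  have clusters_le := meanClusters_add_card_mul_le (N := N + 1) hp
    (harm (2 * (N + 1)) (by push_cast [N]; nlinarith)) J (c := gridPoint m)
    (fun i _ j _ hij => disjoint_block (disjoint_box_gridPoint hij))
    (fun j hj x => by
      obtain ⟨⟨_, _⟩, _, _⟩ := gridPoint_le j hj
      simp only [mem_box, Prod.fst_zero, Prod.snd_zero]
      omega)
    (fun j hj x => by
      obtain ⟨⟨_, _⟩, _, _⟩ := gridPoint_le j hj
      simp only [mem_box, Prod.fst_zero, Prod.snd_zero]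
      omega)
  have shell_le := meanClusters_le_ncard_shell (N + 1) fun _ => p
  rw [ncard_shell_succ] at shell_le
  rw [Finset.card_product, Finset.card_range] at clusters_le
  push_cast [N] at shell_le clusters_le
  rw [sq]
  exact (le_add_of_nonneg_left (meanClusters_nonneg _ _)).trans (clusters_le.trans shell_le)

lemma prob_infinite_openCluster_squareLattice_eq_zero (hp : p ∈ Ico 0 (1 / 2)) :
    ℙ⟦p⟧ {ω | (openCluster 𝕃 ω 0).Infinite} = 0 := by
  by_contra hne
  obtain ⟨m, hm⟩ := exists_one_sub_lt_prob_boxArm (ε := 1 / 8) (by norm_num) hne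
  set κ : ℝ := 1 / 2 * (1 / 2 - p) ^ ((2 * m + 3) ^ 2 * 2)
  have κ_pos : 0 < κ := mul_pos (by norm_num) (pow_pos (sub_pos.2 hp.2) _)
  obtain ⟨T, hT⟩ := exists_nat_gt (16 * (2 * m + 3) / κ)
  have T_pos : (0 : ℝ) < T := (by positivity : 0 ≤ 16 * (2 * m + 3) / κ).trans_lt hT
  have one_le_T : (1 : ℝ) ≤ T := by exact_mod_cast T_pos
  rw [div_lt_iff₀ κ_pos] at hT
  have quadratic_le_linear := sq_mul_le_of_prob_boxArm (Ico_subset_Icc_self hp)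
    (fun n hn c i => by linarith [hm n hn c i]) T
  have := calc 16 * (2 * m + 3) * T < T * κ * T := by gcongr
    _ = T ^ 2 * κ := by ring
    _ ≤ 8 * ((2 * m + 3) * T + m + 1) := quadratic_le_linear
  nlinarith

end Counting

section Decay

variable {p : ℝ}

lemma exists_phi_lt_one (hp : p ∈ Ico 0 (1 / 2)) :
    ∃ S : Finset (ℤ × ℤ), 0 ∈ S ∧ phi 𝕃 0 p S < 1 := by
  by_contra! hphi
  obtain ⟨r, hpr, hr⟩ := exists_between hp.2
  obtain ⟨q, hrq, hq⟩ := exists_between hr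
  have hr0 : 0 < r := hp.1.trans_lt hpr
  have positive := le_prob_infinite_openCluster finite_incidenceSet_squareLattice fun B =>
    one_sub_exp_le_prob_exits finite_incidenceSet_squareLattice hr0 hrq.le (by linarith)
      B.finite_toSet fun S hS => (hphi S hS).trans
        (phi_mono finite_incidenceSet_squareLattice hp.1 hpr.le S.finite_toSet)
  rw [prob_infinite_openCluster_squareLattice_eq_zero ⟨(hr0.trans hrq).le, hq⟩] at positive
  linarith [Real.exp_lt_one_iff.2 (neg_lt_zero.2 (sub_pos.2 hrq))]

lemma prob_exits_box (p : ℝ) (c : ℤ × ℤ) (n : ℤ) :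
    ℙ⟦p⟧ {ω | Exits (OpenLink 𝕃 ω) (box c n) c} = ℙ⟦p⟧ {ω | Exits (OpenLink 𝕃 ω) (box 0 n) 0} := by
  simpa [← preimage_addRight_box c n] using ((isAutomorphism_translation c).prob_exits
    finite_incidenceSet_squareLattice (finite_box c n) p 0).symm

lemma box_subset_box_of_adj {c x y : ℤ × ℤ} {m : ℤ} (hx : x ∈ box c m)
    (hxy : squareLattice.Adj x y) (n : ℤ) : box y n ⊆ box c (m + 1 + n) := by
  obtain ⟨⟨v, d⟩, ⟨rfl, rfl⟩ | ⟨rfl, rfl⟩⟩ := hxy <;> cases d <;> intro z hz <;>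
    simp only [step, mem_box, Prod.fst_add, Prod.snd_add] at hx hz ⊢ <;> omega

lemma prob_exits_box_le_phi_pow (hp : p ∈ Icc 0 1) {S : Finset (ℤ × ℤ)} (h0 : 0 ∈ S) {L : ℕ}
    (hS : (S : Set (ℤ × ℤ)) ⊆ box 0 L) (j : ℕ) :
    ℙ⟦p⟧ {ω | Exits (OpenLink 𝕃 ω) (box 0 (j * (L + 1))) 0} ≤ phi 𝕃 0 p S ^ j := by
  induction j with
  | zero => simp
  | succ j ih =>
    rw [pow_succ']
    refine prob_exits_le_phi_mul finite_incidenceSet_squareLattice hp h0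
      (hS.trans (box_mono 0 (by push_cast; nlinarith))) S.finite_toSet
      (D := fun y => box y (j * (L + 1))) (fun x hx y _ hxy => ⟨finite_box _ _, ?_, ?_⟩)
      (pow_nonneg (phi_nonneg hp.1 _ _) j)
    · refine (box_subset_box_of_adj (hS hx) hxy _).trans_eq ?_
      push_cast
      ring_nf
    · rwa [prob_exits_box]

lemma exists_mul_sq_mul_prob_exits_lt (hp : p ∈ Ico 0 (1 / 2)) (k : ℕ) {C ε : ℝ} (hC : 0 ≤ C)
    (hε : 0 < ε) :
    ∃ m : ℕ, k < m ∧ C * m ^ 2 * ℙ⟦p⟧ {ω | Exits (OpenLink 𝕃 ω) (box 0 (m - 1)) 0} < ε := by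
  obtain ⟨S, h0, hS⟩ := exists_phi_lt_one hp
  obtain ⟨L, hL⟩ := exists_subset_box S
  have hp1 : p ∈ Icc (0 : ℝ) 1 := ⟨hp.1, by linarith [hp.2]⟩
  set φ := phi 𝕃 0 p S
  have φ_nonneg : 0 ≤ φ := phi_nonneg hp.1 _ _
  have tendsto : Filter.Tendsto (fun j : ℕ => C * (L + 2) ^ 2 * ((j : ℝ) ^ 2 * φ ^ j)) .atTop
      (nhds 0) := by
    simpa using (tendsto_pow_const_mul_const_pow_of_abs_lt_one 2
      (by rwa [abs_of_nonneg φ_nonneg])).const_mul (C * (L + 2) ^ 2)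
  obtain ⟨j, hj, hjk⟩ := ((tendsto.eventually_lt_const hε).and
    (Filter.eventually_ge_atTop (k + 1))).exists
  refine ⟨j * (L + 1) + 1, by nlinarith, ?_⟩
  calc C * ((j * (L + 1) + 1 : ℕ) : ℝ) ^ 2 *
        ℙ⟦p⟧ {ω | Exits (OpenLink 𝕃 ω) (box 0 ((j * (L + 1) + 1 : ℕ) - 1)) 0}
      ≤ C * ((L + 2) * j) ^ 2 * φ ^ j := by
        gcongr
        · have : (1 : ℝ) ≤ j := by exact_mod_cast (by omega : 1 ≤ j)
          push_cast
          linarith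
        · simpa using prob_exits_box_le_phi_pow hp1 h0 hL j
    _ = C * (L + 2) ^ 2 * (j ^ 2 * φ ^ j) := by ring
    _ < ε := hj

end Decay

section BinaryDigits

/-- The doubling map of the unit interval, which shifts the binary digits. -/
noncomputable def doubling (x : ℝ) : ℝ := Int.fract (2 * x)

/-- The sequence of binary digits of `x`. -/
noncomputable def binDigits (x : ℝ) : ℕ → Bool := fun n => binDigit n x

/-- The number with the binary digits `b`. -/
noncomputable def ofBinDigits (b : ℕ → Bool) : ℝ := Real.ofDigits fun n => finTwoEquiv.symm (b n)

@[fun_prop]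
lemma measurable_doubling : Measurable doubling := measurable_fract.comp (measurable_const_mul 2)

@[fun_prop]
lemma measurable_binDigit (n : ℕ) : Measurable (binDigit n) :=
  (measurable_from_top (f := fun z : ℤ => decide (z % 2 = 1))).comp
    (Int.measurable_floor.comp (measurable_mul_const _))

@[fun_prop]
lemma measurable_binDigits : Measurable binDigits := measurable_pi_lambda _ measurable_binDigit

@[fun_prop]
lemma measurable_ofBinDigits : Measurable ofBinDigits :=
  Real.continuous_ofDigits.measurable.comp <| measurable_pi_lambda _ fun n =>
    (measurable_of_finite finTwoEquiv.symm).comp (measurable_pi_apply n)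

lemma binDigit_doubling (n : ℕ) (x : ℝ) : binDigit n (doubling x) = binDigit (n + 1) x := by
  have : doubling x * 2 ^ (n + 1) =
      x * 2 ^ (n + 1 + 1) - ((2 * (⌊2 * x⌋ * 2 ^ n) : ℤ) : ℝ) := by
    rw [doubling, Int.fract]
    push_cast
    ring
  simp only [binDigit, this, Int.floor_sub_intCast, Int.sub_mul_emod_self_left]

lemma ofBinDigits_binDigits {x : ℝ} (hx : x ∈ Ico 0 1) : ofBinDigits (binDigits x) = x := by
  have : (fun n => finTwoEquiv.symm (binDigits x n)) = Real.digits x 2 := by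
    funext n
    have floor : (⌊x * 2 ^ (n + 1)⌋₊ : ℤ) = ⌊x * 2 ^ (n + 1)⌋ :=
      Int.natCast_floor_eq_floor (mul_nonneg hx.1 (by positivity))
    simp only [binDigits, binDigit, Real.digits, Nat.cast_ofNat, ← floor]
    refine finTwoEquiv.symm_apply_eq.2 ?_
    simp only [finTwoEquiv, Equiv.coe_fn_mk, Fin.ext_iff, Fin.val_ofNat, Fin.val_one,
      Bool.beq_eq_decide_eq]
    congr 1
    norm_cast
  rw [ofBinDigits, this, Real.ofDigits_digits one_lt_two hx]

lemma binDigit_zero_preimage_inter_doubling_preimage (b : Bool) (B : Set ℝ) :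
    binDigit 0 ⁻¹' {b} ∩ doubling ⁻¹' B ∩ Ico 0 1 =
      (fun x : ℝ => 2 * x - (b.toNat : ℝ)) ⁻¹' (B ∩ Ico 0 1) := by
  ext x
  have floor_iff : ⌊2 * x⌋ = b.toNat ↔ 2 * x - b.toNat ∈ Ico (0 : ℝ) 1 := by
    rw [Int.floor_eq_iff, mem_Ico]
    push_cast
    constructor <;> rintro ⟨h, h'⟩ <;> constructor <;> linarith
  have digit_iff (hx : x ∈ Ico 0 1) : binDigit 0 x = b ↔ ⌊2 * x⌋ = b.toNat := by
    have : 0 ≤ ⌊2 * x⌋ := Int.floor_nonneg.2 (by linarith [hx.1])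
    have : ⌊2 * x⌋ < 2 := Int.floor_lt.2 (by push_cast; linarith [hx.2])
    have digit : binDigit 0 x = decide (⌊2 * x⌋ % 2 = 1) := by simp [binDigit, mul_comm x]
    cases b <;> simp only [digit, decide_eq_true_iff, decide_eq_false_iff_not, Bool.toNat_false,
      Bool.toNat_true] <;> omega
  have mem_Ico_of_shift (h : 2 * x - b.toNat ∈ Ico (0 : ℝ) 1) : x ∈ Ico 0 1 := by
    cases b <;> simp only [Bool.toNat_false, Bool.toNat_true, Nat.cast_zero, Nat.cast_one,
      mem_Ico] at h ⊢ <;> constructor <;> linarith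
  simp only [mem_inter_iff, mem_preimage, mem_singleton_iff, doubling, Int.fract]
  constructor
  · rintro ⟨⟨hb, hB⟩, hx⟩
    rw [(digit_iff hx).1 hb] at hB
    exact ⟨mod_cast hB, floor_iff.1 ((digit_iff hx).1 hb)⟩
  · rintro ⟨hB, hx⟩
    rw [floor_iff.2 hx]
    exact ⟨⟨(digit_iff (mem_Ico_of_shift hx)).2 (floor_iff.2 hx), mod_cast hB⟩,
      mem_Ico_of_shift hx⟩

lemma unitUniform_binDigit_zero_inter_doubling_preimage (b : Bool) {B : Set ℝ}
    (hB : MeasurableSet B) :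
    unitUniform (binDigit 0 ⁻¹' {b} ∩ doubling ⁻¹' B) = 2⁻¹ * unitUniform B := by
  rw [unitUniform, Measure.restrict_apply (by measurability),
    Measure.restrict_apply hB, binDigit_zero_preimage_inter_doubling_preimage]
  calc volume ((fun x : ℝ => 2 * x - b.toNat) ⁻¹' (B ∩ Ico 0 1))
      = volume ((2 * ·) ⁻¹' ((· + -(b.toNat : ℝ)) ⁻¹' (B ∩ Ico 0 1))) := by
        simp only [sub_eq_add_neg, preimage_preimage]
    _ = 2⁻¹ * volume (B ∩ Ico 0 1) := by
      rw [Real.volume_preimage_mul_left two_ne_zero, measure_preimage_add_right,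
        abs_of_pos (by norm_num), ENNReal.ofReal_inv_of_pos two_pos, ENNReal.ofReal_ofNat]

lemma coin_half_singleton (b : Bool) : coin (1 / 2) {b} = 2⁻¹ := by
  have : (coin (1 / 2)).real {b} = 2⁻¹ := by
    cases b <;> norm_num [coin_real_true, coin_real_false]
  rw [← ofReal_measureReal, this, ENNReal.ofReal_inv_of_pos two_pos, ENNReal.ofReal_ofNat]

lemma unitUniform_map_binDigit_zero_doubling :
    unitUniform.map (fun x => (binDigit 0 x, doubling x)) = (coin (1 / 2)).prod unitUniform := by
  refine (Measure.prod_eq fun s t hs ht => ?_).symm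
  have : (unitUniform.restrict (doubling ⁻¹' t)).map (binDigit 0) =
      unitUniform t • coin (1 / 2) := by
    refine Measure.ext_of_singleton fun b => ?_
    have hb := measurable_binDigit 0 (measurableSet_singleton b)
    rw [Measure.map_apply (measurable_binDigit 0) (measurableSet_singleton b),
      Measure.restrict_apply hb, unitUniform_binDigit_zero_inter_doubling_preimage b ht,
      Measure.smul_apply, coin_half_singleton, smul_eq_mul, mul_comm]
  rw [Measure.map_apply (by fun_prop) (hs.prod ht), mk_preimage_prod,
    ← Measure.restrict_apply (measurable_binDigit 0 hs), ← Measure.map_apply (by fun_prop) hs, this,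
    Measure.smul_apply, smul_eq_mul, mul_comm]

lemma unitUniform_binDigits_pi (t : ℕ → Set Bool) (n : ℕ) :
    unitUniform {x | ∀ i < n, binDigit i x ∈ t i} = ∏ i ∈ Finset.range n, coin (1 / 2) (t i) := by
  induction n generalizing t with
  | zero => simp
  | succ n ih =>
    have measurable : MeasurableSet {x | ∀ i < n, binDigit i x ∈ t (i + 1)} := by
      simp only [ofPred_forall]
      exact .iInter fun i => .iInter fun _ => measurable_binDigit i (toFinite _).measurableSet
    have preimage : {x | ∀ i < n + 1, binDigit i x ∈ t i} =
        (fun x => (binDigit 0 x, doubling x)) ⁻¹'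
          (t 0 ×ˢ {x | ∀ i < n, binDigit i x ∈ t (i + 1)}) := by
      ext x
      simp only [mem_ofPred_eq, mem_preimage, mem_prod, binDigit_doubling]
      exact Nat.forall_lt_succ_left
    rw [preimage, ← Measure.map_apply (by fun_prop) ((toFinite _).measurableSet.prod measurable),
      unitUniform_map_binDigit_zero_doubling, Measure.prod_prod, ih, Finset.prod_range_succ',
      mul_comm]

lemma unitUniform_map_binDigits :
    unitUniform.map binDigits = Measure.infinitePi fun _ => coin (1 / 2) := by
  classical
  refine Measure.eq_infinitePi _ fun s t ht => ?_
  obtain ⟨n, hn⟩ := s.exists_nat_subset_range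
  have preimage : binDigits ⁻¹' (s : Set ℕ).pi t =
      {x | ∀ i < n, binDigit i x ∈ if i ∈ s then t i else univ} := by
    ext x
    have : ∀ i ∈ s, i < n := fun i hi => Finset.mem_range.1 (hn hi)
    simp only [mem_preimage, mem_pi, Finset.mem_coe, mem_ofPred_eq, binDigits]
    grind
  rw [Measure.map_apply measurable_binDigits (.pi s.countable_toSet fun _ _ => ht _), preimage,
    unitUniform_binDigits_pi, ← Finset.prod_subset hn fun i _ hi => by rw [if_neg hi, measure_univ]]
  exact Finset.prod_congr rfl fun i hi => by rw [if_pos hi]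

lemma infinitePi_coin_map_ofBinDigits :
    (Measure.infinitePi fun _ => coin (1 / 2)).map ofBinDigits = unitUniform := by
  have : ofBinDigits ∘ binDigits =ᵐ[unitUniform] id := by
    filter_upwards [ae_restrict_mem measurableSet_Ico] with x hx using ofBinDigits_binDigits hx
  rw [← unitUniform_map_binDigits, Measure.map_map measurable_ofBinDigits measurable_binDigits,
    Measure.map_congr this, Measure.map_id]

lemma unifSample_eq_ofBinDigits (i : ℕ) (x : ℝ) :
    unifSample i x = ofBinDigits fun n => binDigit (Nat.pair i n) x := by
  refine tsum_congr fun n => ?_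
  cases h : binDigit (Nat.pair i n) x <;> simp [Real.ofDigitsTerm, finTwoEquiv, h]

@[fun_prop]
lemma measurable_unifSample (i : ℕ) : Measurable (unifSample i) := by
  simp only [funext (unifSample_eq_ofBinDigits i)]
  fun_prop

lemma unitUniform_map_unifSample :
    unitUniform.map (fun x i => unifSample i x) = uniformField ℕ := by
  have comp : (fun x i => unifSample i x) = (fun (b : ℕ → ℕ → Bool) i => ofBinDigits (b i)) ∘
      MeasurableEquiv.curry ℕ ℕ Bool ∘ (fun b z => b (Nat.pair z.1 z.2)) ∘ binDigits := by
    funext x i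
    exact unifSample_eq_ofBinDigits i x
  have reindex : (Measure.infinitePi fun _ => coin (1 / 2)).map
      (fun b (z : ℕ × ℕ) => b (Nat.pair z.1 z.2)) = Measure.infinitePi fun _ => coin (1 / 2) :=
    Measure.map_infinitePi_infinitePi_of_inj (P := fun _ => coin (1 / 2)) Nat.pairEquiv.injective
  rw [comp, ← Measure.map_map (by fun_prop) (by fun_prop),
    ← Measure.map_map (by fun_prop) (by fun_prop), ← Measure.map_map (by fun_prop) (by fun_prop),
    unitUniform_map_binDigits, reindex, Measure.infinitePi_map_curry fun _ _ => coin (1 / 2),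
    Measure.infinitePi_map_pi _ fun _ => measurable_ofBinDigits, uniformField]
  simp only [infinitePi_coin_map_ofBinDigits]

lemma bernoulliProduct_eq_percMeasure {ι : Type*} [Encodable ι] (P : ι → ℝ) :
    bernoulliProduct P = percMeasure P := by
  have marginal : (uniformField ℕ).map (fun u (i : ι) => u (Encodable.encode i)) = uniformField ι :=
    Measure.map_infinitePi_infinitePi_of_inj (P := fun _ => unitUniform) Encodable.encode_injective
  rw [percMeasure, ← marginal, ← unitUniform_map_unifSample, Measure.map_map (by fun_prop)
    (by fun_prop), Measure.map_map (by fun_prop) (by fun_prop)]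
  rfl

end BinaryDigits

section Slab

variable {k m : ℕ} {ω : Config} {x u v : Vtx} {B R : Set (ℤ × ℤ)} {A : Set Vtx}

/-- The vertical projection of the slab onto the square lattice. -/
def column (v : Vtx) : ℤ × ℤ := (v.1, v.2.1)

/-- The embedding of the edges of the square lattice into the slab at height `z`. -/
def level (z : ℤ) (e : (ℤ × ℤ) × Bool) : EdgeIdx := ((e.1.1, e.1.2, z), if e.2 then 1 else 0)

/-- The vertical edges of the slab above the vertices in `R`, together with those leaving the slab
at the top, which are harmless. -/
def verticalEdges (k : ℕ) (R : Set (ℤ × ℤ)) : Set EdgeIdx :=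
  {e | e.2 = 2 ∧ column e.1 ∈ R ∧ InSlab k e.1}

lemma level_injective (z : ℤ) : (level z).Injective := by
  rintro ⟨⟨a, b⟩, d⟩ ⟨⟨a', b'⟩, d'⟩ h
  cases d <;> cases d' <;> simp_all [level]

lemma finite_verticalEdges (hR : R.Finite) : (verticalEdges k R).Finite := by
  refine ((hR.prod (finite_Icc (0 : ℤ) k)).image fun y => ((y.1.1, y.1.2, y.2), 2)).subset ?_
  rintro ⟨v, i⟩ ⟨rfl, hv, hv'⟩
  exact ⟨(column v, v.2.2), ⟨hv, hv'⟩, rfl⟩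

lemma openLink_of_openAdj (hω : ∀ e ∈ verticalEdges k R, ω e = false) (hu : column u ∈ R)
    (h : OpenAdj k ω u v) :
    v.2.2 = u.2.2 ∧ OpenLink 𝕃 (ω ∘ level u.2.2) (column u) (column v) := by
  have link (w : Vtx) (d : Bool) (hw : ω (w, if d then 1 else 0) = true) :
      OpenLink 𝕃 (ω ∘ level w.2.2) (column w) (column w + step d) :=
    ⟨(column w, d), hw, isLink_squareLattice _⟩
  obtain ⟨i, ⟨rfl, hE, ho⟩ | ⟨rfl, hE, ho⟩⟩ := h <;> fin_cases i
  · exact ⟨by simp [dvec], by simpa [column, dvec, step] using link u false ho⟩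
  · exact ⟨by simp [dvec], by simpa [column, dvec, step] using link u true ho⟩
  · simp [hω (u, 2) ⟨rfl, hu, hE.1⟩] at ho
  · exact ⟨by simp [dvec], by simpa [column, dvec, step] using (link v false ho).symm⟩
  · exact ⟨by simp [dvec], by simpa [column, dvec, step] using (link v true ho).symm⟩
  · simp [hω (v, 2) ⟨rfl, by simpa [column, dvec] using hu, hE.1⟩] at ho

lemma exits_openLink_column (hω : ∀ e ∈ verticalEdges k B, ω e = false)
    (h : Exits (OpenAdj k ω) (column ⁻¹' B) x) :
    Exits (OpenLink 𝕃 (ω ∘ level x.2.2)) B (column x) := by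
  induction h using Exits.induction_on with
  | notMem x hx => exact .of_notMem hx
  | head u hu v huv _ ih =>
    obtain ⟨height, link⟩ := openLink_of_openAdj hω hu huv
    rw [height] at ih
    exact ih.head link

lemma inSlab_of_mem_cluster (hx : InSlab k x) (hu : u ∈ cluster k ω x) : InSlab k u := by
  obtain rfl | ⟨v, -, i, ⟨rfl, hE, -⟩ | ⟨-, hE, -⟩⟩ := Relation.ReflTransGen.cases_tail hu
  exacts [hx, hE.2, hE.1]

lemma exists_exits_of_mem_CmEvent (hkm : k < m) (hA : ∀ x ∈ A, InSlab k x)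
    (hω : ω ∈ CmEvent k m A) :
    ∃ x ∈ A, Exits (OpenAdj k ω) (column ⁻¹' box (column x) (m - 1)) x := by
  obtain ⟨x, hx, y, hy, far, -⟩ := hω
  refine ⟨x, hx, y, fun hyx => ?_, hy⟩
  have hx' := hA x hx
  have hy' := inSlab_of_mem_cluster hx' hy
  have := far x hx
  simp only [mem_preimage, mem_box, column, InSlab, supDist] at hyx hx' hy' this
  grind

lemma CmEvent_subset (hkm : k < m) (hA : ∀ x ∈ A, InSlab k x)
    (hR : ∀ x ∈ A, box (column x) (m - 1) ⊆ R) :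
    CmEvent k m A ⊆ (⋃ e ∈ verticalEdges k R, {ω | ω e = true}) ∪ ⋃ x ∈ A,
      {ω | ω ∘ level x.2.2 ∈ {ω | Exits (OpenLink 𝕃 ω) (box (column x) (m - 1)) (column x)}} := by
  intro ω hω
  by_cases open_vertical : ∃ e ∈ verticalEdges k R, ω e = true
  · exact .inl (by simpa using open_vertical)
  · obtain ⟨x, hx, h⟩ := exists_exits_of_mem_CmEvent hkm hA hω
    have closed : ∀ e ∈ verticalEdges k R, ω e = false := by simpa using open_vertical
    exact .inr (mem_biUnion hx (exits_openLink_column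
      (fun e he => closed e ⟨he.1, hR x hx he.2.1, he.2.2⟩) h))

lemma prob_biUnion_le {ι κ : Type*} {P : ι → ℝ} {S : Set κ} (hS : S.Finite)
    {E : κ → Set (ι → Bool)} {c : ℝ} (hE : ∀ i ∈ S, ℙ[P] (E i) ≤ c) :
    ℙ[P] (⋃ i ∈ S, E i) ≤ S.ncard * c := by
  lift S to Finset κ using hS
  rw [ncard_coe_finset, ← nsmul_eq_mul]
  exact (measureReal_biUnion_finset_le S E).trans (Finset.sum_le_card_nsmul _ _ _ hE)

lemma exists_slabMeasure_CmEvent_le (hkm : k < m) (hA : A.Finite) (hA' : ∀ x ∈ A, InSlab k x)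
    (p : ℝ) : ∃ N : ℕ, ∀ q ∈ Icc (0 : ℝ) 1, (slabMeasure k p q).real (CmEvent k m A) ≤
      N * q + A.ncard * ℙ⟦p⟧ {ω | Exits (OpenLink 𝕃 ω) (box 0 (m - 1)) 0} := by
  set R := ⋃ x ∈ A, box (column x) (m - 1)
  have finite_vertical : (verticalEdges k R).Finite :=
    finite_verticalEdges (hA.biUnion fun _ _ => finite_box _ _)
  refine ⟨(verticalEdges k R).ncard, fun q hq => ?_⟩
  rw [slabMeasure, bernoulliProduct_eq_percMeasure]
  refine (measureReal_mono (CmEvent_subset hkm hA' fun x hx =>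
    subset_biUnion_of_mem (u := fun x => box (column x) (m - 1)) hx)).trans
      ((measureReal_union_le _ _).trans (add_le_add ?_ ?_))
  · refine prob_biUnion_le finite_vertical fun e he => ?_
    rw [prob_open (by simpa [he.1] using hq), if_pos he.1]
  · refine prob_biUnion_le hA fun x _ => ?_
    have horizontal : (fun e : EdgeIdx => if e.2 = 2 then q else p) ∘ level x.2.2 = fun _ => p := by
      funext ⟨_, d⟩
      cases d <;> simp [level]
    rw [prob_preimage_comp (level_injective _) _
      (isLocal_exits finite_incidenceSet_squareLattice (finite_box _ _) _).measurableSet,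
      horizontal, prob_exits_box]

lemma Sm_eq (k m : ℕ) : Sm k m = Icc (0 : ℤ) (m - 1) ×ˢ Icc (0 : ℤ) (m - 1) ×ˢ Icc (0 : ℤ) k := by
  ext
  simp only [Sm, InSlab, mem_ofPred_eq, mem_prod, mem_Icc]
  tauto

lemma ncard_Sm (k m : ℕ) : (Sm k m).ncard = (k + 1) * m ^ 2 := by
  rw [Sm_eq, ncard_prod, ncard_prod]
  simp only [← Finset.coe_Icc, ncard_coe_finset, Int.card_Icc, sub_add_cancel, sub_zero]
  rw [Int.toNat_natCast, ← Nat.cast_add_one, Int.toNat_natCast]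
  ring

end Slab

/-- For `p < 1/2` and `ε > 0` there are `m > k` and `δ > 0` such that
`P_{p,q}(C_m(S_m)) < ε` for all `q ∈ [0, δ)`. -/
theorem Cm_small (k : ℕ) (p : ℝ) (hp0 : 0 ≤ p) (hp : p < 1 / 2)
    (ε : ℝ) (hε : 0 < ε) :
    ∃ m : ℕ, k < m ∧ ∃ δ : ℝ, 0 < δ ∧ ∀ q : ℝ, 0 ≤ q → q < δ →
      slabMeasure k p q (CmEvent k m (Sm k m)) < ENNReal.ofReal ε := by
  obtain ⟨m, hkm, horizontal⟩ := exists_mul_sq_mul_prob_exits_lt ⟨hp0, hp⟩ k (C := k + 1)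
    (by positivity) (half_pos hε)
  have finite_Sm : (Sm k m).Finite := Sm_eq k m ▸ toFinite _
  obtain ⟨N, hN⟩ := exists_slabMeasure_CmEvent_le hkm finite_Sm (fun _ hx => hx.2.2.2.2) p
  refine ⟨m, hkm, min 1 (ε / 2 / (N + 1)), by positivity, fun q hq hqδ => ?_⟩
  have hq1 : q < 1 := hqδ.trans_le (min_le_left _ _)
  have vertical : q * (N + 1) < ε / 2 :=
    (lt_div_iff₀ (by positivity)).1 (hqδ.trans_le (min_le_right _ _))
  have := hN q ⟨hq, hq1.le⟩
  rw [ncard_Sm] at this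
  push_cast at this
  rw [slabMeasure, bernoulliProduct_eq_percMeasure] at this ⊢
  rw [← ofReal_measureReal, ENNReal.ofReal_lt_ofReal_iff hε]
  linarith

end AnisoSlab
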